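/- Let k | h and set r := h/k. Let w be a divisor of (q+1)/2 and let L̄ ≤ M_ℓ be a subgroup such that |L̄ ∩ Z₁| = w and L̄ is the internal direct product of L̄ ∩ Z₁ and a subgroup S isomorphic to SL(2, 𝔽_{p^k}). If r is even, then the number N of orbits of L̄ acting on O equals 2 + 2(q−p^{2k})/(p^k(p^{2k}−1)) + (q/p^k)·((q−1)/(p^{2k}−1))·((q+1)/w). If r is odd, then N = 1 + 2(q−p^k)/(p^k(p^{2k}−1)) + (q+1)·gcd(p^k+1, w)/((p^k+1)·w) + (q²−q−p^k(p^k−1))·(q+1)/(p^k(p^k−1)(p^k+1)·w). -/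

import Mathlib

/-!
Write `E` for the field of order `P = p ^ k`. A subgroup of `M_ℓ` isomorphic to `SL₂(E)` has
trivial determinant, because `SL₂(E)` is generated by elements of order `p`
(`HermOrb.exists_block`). So `L` is the image of `SL₂(E) × μ_w` under `(m, e) ↦ ρ(m) diag(e, e, 1)`,
where `ρ` is an embedding of `SL₂(E)` into the special unitary group of the Hermitian form
`x ^ (q + 1) - y ^ (q + 1)`, and the orbits are counted by Burnside's lemma
(`HermOrb.numOrbits_mul_card`).

Nothing is known about `ρ` beyond injectivity. The argument therefore expresses every number of
fixed points through the order of `m`, which `ρ` preserves: an element of `SL₂` over a field of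
characteristic `p` whose order does not divide `2 * p` has the same order as its eigenvalues
(`HermOrb.pow_eq_one_iff`).

* Points `(1 : t : 0)` at infinity (`HermOrb.card_inf`): the scalar `e` acts trivially, and `ρ(m)`
  fixes `q + 1` points if `m ^ 2 = 1`, otherwise one point if `m ^ (2 * p) = 1`, otherwise two
  points if `m ^ (q - 1) = 1`, and none in the remaining case.
* Affine points `(x : y : 1)`: these are the vectors of norm one, on which the special unitary group
  acts freely. For `e = 1` only `m = 1` has fixed points, all `q ^ 3 - q` of them. For `e ≠ 1` there
  are `q + 1` fixed points if `e` is an eigenvalue of `ρ(m)`, and none otherwise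
  (`HermOrb.card_aff`). Summed over `e`, this gives `2 * (q + 1)` for each `m ≠ 1` with `m ^ w = 1`
  (`HermOrb.sum_aff`).

It remains to sum over `SL₂(E)`, where the number of elements of trace `T` is
`P * (P - 1) + P * nRoots T`, with `nRoots T` the number of roots of `X ^ 2 - T * X + 1` in `E`
(`HermOrb.card_trace`). The affine contribution involves `gcd (P + 1) w` (`HermOrb.sum_eps`), which
is `1` for even `r`. The contribution at infinity is found in `HermOrb.sum_inf_odd` and
`HermOrb.sum_inf_even`; the parity of `r = h / k` decides whether elements of order dividing `P + 1`
have their eigenvalues in the field of order `q`.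
-/

open Matrix

noncomputable def glAct {F : Type*} [Field F] (M : GL (Fin 3) F)
    (x : Projectivization F (Fin 3 → F)) : Projectivization F (Fin 3 → F) :=
  Projectivization.map
    ((LinearMap.GeneralLinearGroup.generalLinearEquiv F (Fin 3 → F)
        (Matrix.GeneralLinearGroup.toLin M)).toLinearMap)
    ((LinearMap.GeneralLinearGroup.generalLinearEquiv F (Fin 3 → F)
        (Matrix.GeneralLinearGroup.toLin M)).injective) x

noncomputable def numOrbits {F : Type*} [Field F] (L : Subgroup (GL (Fin 3) F))
    (O : Set (Projectivization F (Fin 3 → F))) : ℕ :=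
  Nat.card ((fun x => {y | ∃ g ∈ L, glAct g x = y}) '' O :
    Set (Set (Projectivization F (Fin 3 → F))))

def hermitianPts (q : ℕ) (F : Type*) [Field F] : Set (Projectivization F (Fin 3 → F)) :=
  {x | x.rep 1 ^ (q + 1) = x.rep 0 ^ (q + 1) - x.rep 2 ^ (q + 1)}

def MlSet (q : ℕ) (F : Type*) [Field F] : Set (GL (Fin 3) F) :=
  {M | ∃ a c τ : F, a ^ (q + 1) - c ^ (q + 1) = 1 ∧ τ ^ (q + 1) = 1 ∧
    (M : Matrix (Fin 3) (Fin 3) F) = !![a, τ * c ^ q, 0; c, τ * a ^ q, 0; 0, 0, 1]}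

def ZSet (q : ℕ) (F : Type*) [Field F] : Set (GL (Fin 3) F) :=
  {M | ∃ ε : F, ε ^ (q + 1) = 1 ∧ (M : Matrix (Fin 3) (Fin 3) F) = Matrix.diagonal ![ε, ε, 1]}

def Z1Set (q : ℕ) (F : Type*) [Field F] : Set (GL (Fin 3) F) :=
  {M | ∃ ε : F, ε ^ ((q + 1) / 2) = 1 ∧
    (M : Matrix (Fin 3) (Fin 3) F) = Matrix.diagonal ![ε, ε, 1]}

namespace HermOrb

section
open scoped Classical
open Finset

/-! ### Roots of unity and norms in finite fields -/

lemma card_pow_eq_one_field {F : Type*} [Field F] [Fintype F] {n : ℕ}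
    (hn : n ∣ Fintype.card F - 1) : #{x : F | x ^ n = 1} = n := by
  have hpos : 0 < Fintype.card F - 1 := by
    have := Fintype.one_lt_card (α := F); omega
  have hn0 : 0 < n := Nat.pos_of_dvd_of_pos hn hpos
  have h1 := IsCyclic.card_powMonoidHom_ker (G := Fˣ) n
  rw [Nat.card_units, Nat.card_eq_fintype_card (α := F), Nat.gcd_eq_right hn] at h1
  rw [← Fintype.card_subtype, ← Nat.card_eq_fintype_card]
  refine Eq.trans (Nat.card_congr (Equiv.ofBijective
    (fun u : (powMonoidHom n : Fˣ →* Fˣ).ker => (⟨(u.1 : F), ?_⟩ : {x : F // x ^ n = 1})) ?_)).symm h1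
  · have := u.2
    rw [MonoidHom.mem_ker, powMonoidHom_apply] at this
    have h2 := congrArg Units.val this
    simpa using h2
  · constructor
    · intro u v huv
      have : (u.1 : F) = v.1 := congrArg Subtype.val huv
      exact Subtype.ext (Units.ext this)
    · rintro ⟨x, hx⟩
      have hx0 : x ≠ 0 := by rintro rfl; simp [hn0.ne'] at hx
      refine ⟨⟨Units.mk0 x hx0, ?_⟩, rfl⟩
      rw [MonoidHom.mem_ker, powMonoidHom_apply]
      ext; simpa using hx

lemma exists_norm_eq {F : Type*} [Field F] [Fintype F] {q : ℕ} (hF : Fintype.card F = q ^ 2)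
    {X : F} (hX : X ≠ 0) (hXq : X ^ q = X) : ∃ x : F, x ^ (q + 1) = X := by
  have hq : 2 ≤ q := by
    have := Fintype.one_lt_card (α := F); rw [hF] at this
    by_contra hc
    interval_cases q <;> simp at this
  obtain ⟨g, hg⟩ := IsCyclic.exists_generator (α := Fˣ)
  have hord : orderOf g = (q + 1) * (q - 1) := by
    rw [orderOf_eq_card_of_forall_mem_zpowers hg, Nat.card_units, Nat.card_eq_fintype_card, hF]
    obtain ⟨r, rfl⟩ := Nat.exists_eq_add_of_le hq
    rw [show 2 + r - 1 = 1 + r by omega]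
    have : (2 + r)^2 = (2 + r + 1) * (1 + r) + 1 := by ring
    omega
  obtain ⟨j, hj⟩ := (mem_powers_iff_mem_zpowers.mpr (hg (Units.mk0 X hX)))
  have h1 : g ^ (j * (q - 1)) = 1 := by
    rw [pow_mul]
    simp only at hj
    rw [hj]
    ext
    simp only [Units.val_pow_eq_pow_val, Units.val_mk0, Units.val_one]
    have : X ^ (q - 1) * X = 1 * X := by
      rw [← pow_succ, Nat.sub_add_cancel (by omega), hXq, one_mul]
    exact mul_right_cancel₀ hX this
  rw [← orderOf_dvd_iff_pow_eq_one, hord] at h1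
  obtain ⟨i, rfl⟩ := Nat.dvd_of_mul_dvd_mul_right (by omega) h1
  refine ⟨((g ^ i : Fˣ) : F), ?_⟩
  have := congrArg Units.val hj
  simp only [Units.val_pow_eq_pow_val, Units.val_mk0] at this
  rw [← this]
  push_cast
  ring

lemma card_norm_eq {F : Type*} [Field F] [Fintype F] {q : ℕ} (hF : Fintype.card F = q ^ 2)
    {X : F} (hX : X ≠ 0) (hXq : X ^ q = X) : #{x : F | x ^ (q + 1) = X} = q + 1 := by
  obtain ⟨x₀, hx₀⟩ := exists_norm_eq hF hX hXq
  have hx0 : x₀ ≠ 0 := by rintro rfl; simp at hx₀; exact hX hx₀.symm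
  have h1 : #{x : F | x ^ (q + 1) = 1} = q + 1 := by
    apply card_pow_eq_one_field
    rw [hF]
    exact ⟨q - 1, by have := Nat.sq_sub_sq q 1; simpa using this⟩
  refine Eq.trans (Eq.symm ?_) h1
  apply Finset.card_bij (fun x _ => x₀ * x)
  · intro x hx
    simp only [mem_filter, mem_univ, true_and] at hx ⊢
    rw [mul_pow, hx, hx₀, mul_one]
  · intro a _ b _ hab
    exact mul_left_cancel₀ hx0 hab
  · intro b hb
    simp only [mem_filter, mem_univ, true_and] at hb ⊢
    exact ⟨b / x₀, by rw [div_pow, hb, hx₀, div_self hX], by field_simp⟩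

/-- Elements of the subfield of order `q` are squares in the field of order `q ^ 2`, so a
`q`-rational monic quadratic with constant term `1` splits. -/
lemma exists_root {F : Type*} [Field F] [Fintype F] {q : ℕ} (hF : Fintype.card F = q ^ 2)
    (σ : F →+* F) (hσ : ∀ x, σ x = x ^ q) (h2 : (2 : F) ≠ 0) {T : F} (hT : σ T = T) :
    ∃ l : F, l ≠ 0 ∧ T = l + l⁻¹ := by
  have hsq : IsSquare (T ^ 2 - 4) := by
    by_cases hD : T ^ 2 - 4 = 0
    · rw [hD]; exact ⟨0, by simp⟩
    · have hDq : (T ^ 2 - 4) ^ q = T ^ 2 - 4 := by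
        rw [← hσ]; rw [map_sub, map_pow, hT, map_ofNat]
      obtain ⟨x, hx⟩ := exists_norm_eq hF hD hDq
      have hodd : q % 2 = 1 := by
        have := FiniteField.odd_card_of_char_ne_two (F := F) (by
          intro hc; apply h2; have := ringChar.Nat.cast_ringChar (R := F); rw [hc] at this; exact_mod_cast this)
        rw [hF, Nat.pow_mod] at this
        rcases Nat.mod_two_eq_zero_or_one q with h | h <;> simp_all
      refine ⟨x ^ ((q + 1) / 2), ?_⟩
      rw [← pow_add, ← hx]; congr 1; omega
  obtain ⟨d, hd⟩ := hsq
  have h4 : (4 : F) ≠ 0 := by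
    have : (4 : F) = 2 * 2 := by norm_num
    rw [this]; exact mul_ne_zero h2 h2
  have hprod : ((T + d) / 2) * ((T - d) / 2) = 1 := by
    field_simp
    linear_combination hd
  have hl : (T + d) / 2 ≠ 0 := left_ne_zero_of_mul_eq_one hprod
  refine ⟨(T + d) / 2, hl, ?_⟩
  rw [← eq_inv_of_mul_eq_one_right hprod]
  field_simp; ring

/-! ### Powers in `SL₂` through eigenvalues -/

section powers
variable {F : Type*} [Field F]

lemma sq_eq (m : SpecialLinearGroup (Fin 2) F) :
    (m : Matrix (Fin 2) (Fin 2) F) ^ 2 = (m 0 0 + m 1 1) • (m : Matrix (Fin 2) (Fin 2) F) - 1 := by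
  have hd := m.det_coe
  rw [det_fin_two] at hd
  ext i j
  fin_cases i <;> fin_cases j <;>
    simp [pow_two, Matrix.mul_apply, Fin.sum_univ_two] <;>
    first | ring1 | linear_combination (-1) * hd

lemma pow_val_eq_one_iff (m : SpecialLinearGroup (Fin 2) F) (n : ℕ) :
    m ^ n = 1 ↔ (m : Matrix (Fin 2) (Fin 2) F) ^ n = 1 :=
  ⟨fun hm => congrArg Subtype.val hm, fun hm => Subtype.ext hm⟩

/-- Reduction of a power modulo the characteristic polynomial, simultaneously for the matrix and
its eigenvalues. -/
lemma pow_eq (m : SpecialLinearGroup (Fin 2) F) (n : ℕ) : ∃ u v : F,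
    (m : Matrix (Fin 2) (Fin 2) F) ^ n = u • (m : Matrix (Fin 2) (Fin 2) F) + v • 1 ∧
    ∀ l : F, l ≠ 0 → m 0 0 + m 1 1 = l + l⁻¹ → l ^ n = u * l + v := by
  induction n with
  | zero => exact ⟨0, 1, by simp, by simp⟩
  | succ n ih =>
    obtain ⟨u, v, h1, h2⟩ := ih
    refine ⟨u * (m 0 0 + m 1 1) + v, -u, ?_, ?_⟩
    · rw [pow_succ, h1, add_mul, smul_mul_assoc, ← pow_two, sq_eq, smul_mul_assoc, one_mul,
        smul_sub, smul_smul, add_smul, neg_smul]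
      abel
    · intro l hl hT
      rw [pow_succ, h2 l hl hT, hT]
      field_simp
      ring

/-- A matrix of determinant one with distinct eigenvalues `l`, `l⁻¹` has the order of `l`. -/
lemma pow_eq_one_iff (m : SpecialLinearGroup (Fin 2) F) {l : F} (hl : l ≠ 0)
    (hT : m 0 0 + m 1 1 = l + l⁻¹) (hl2 : l ^ 2 ≠ 1) (n : ℕ) : m ^ n = 1 ↔ l ^ n = 1 := by
  obtain ⟨u, v, h1, h2⟩ := pow_eq m n
  have ha := h2 l hl hT
  have hb := h2 l⁻¹ (inv_ne_zero hl) (by rw [hT, inv_inv, add_comm])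
  have hne : l - l⁻¹ ≠ 0 := by
    intro hc
    apply hl2
    have : l = l⁻¹ := sub_eq_zero.mp hc
    calc l ^ 2 = l * l := pow_two l
      _ = l * l⁻¹ := by rw [← this]
      _ = 1 := mul_inv_cancel₀ hl
  rw [pow_val_eq_one_iff, h1]
  constructor
  · intro hm
    have hu : u = 0 := by
      by_contra hu
      have e00 := congrFun (congrFun hm 0) 0
      have e01 := congrFun (congrFun hm 0) 1
      have e10 := congrFun (congrFun hm 1) 0
      have e11 := congrFun (congrFun hm 1) 1
      simp at e00 e01 e10 e11
      have hd := m.det_coe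
      rw [det_fin_two] at hd
      rcases e01 with h | h
      · exact hu h
      · have heq : m 0 0 = m 1 1 := mul_left_cancel₀ hu (by linear_combination e00 - e11)
        rw [h, heq] at hd
        rw [heq] at hT
        have hz : (l - l⁻¹) ^ 2 = 0 := by
          have : l * l⁻¹ = 1 := mul_inv_cancel₀ hl
          linear_combination (-(m 1 1 + m 1 1 + (l + l⁻¹))) * hT + 4 * hd - 4 * this
        exact hne (pow_eq_zero_iff (two_ne_zero) |>.mp hz)
    rw [hu] at hm ha
    have e00 := congrFun (congrFun hm 0) 0
    simp at e00
    rw [ha, e00]; ring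
  · intro hln
    rw [inv_pow, hln, inv_one] at hb
    rw [hln] at ha
    have hu : u = 0 := by
      have : u * (l - l⁻¹) = 0 := by linear_combination hb - ha
      exact (mul_eq_zero.mp this).resolve_right hne
    rw [hu] at ha ⊢
    have : v = 1 := by linear_combination -ha
    rw [this]; simp

lemma pow_two_mul_char (p : ℕ) [CharP F p] (m : SpecialLinearGroup (Fin 2) F) {l : F}
    (hl2 : l ^ 2 = 1) (hT : m 0 0 + m 1 1 = 2 * l) : m ^ (2 * p) = 1 := by
  have key : ∀ n : ℕ, (m : Matrix (Fin 2) (Fin 2) F) ^ n =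
      (n * l ^ (n + 1)) • (m : Matrix (Fin 2) (Fin 2) F) + ((1 - n) * l ^ n) • 1 := by
    intro n
    induction n with
    | zero => simp
    | succ n ih =>
      rw [pow_succ, ih, add_mul, smul_mul_assoc, ← pow_two, sq_eq, hT, smul_mul_assoc, one_mul,
        smul_sub, smul_smul]
      have e1 : (n * l ^ (n + 1)) * (2 * l) + (1 - n) * l ^ n =
          ((n + 1 : ℕ) : F) * l ^ (n + 1 + 1) := by
        push_cast
        linear_combination (n - 1 : F) * l ^ n * hl2
      have e2 : -(n * l ^ (n + 1)) = (1 - ((n + 1 : ℕ) : F)) * l ^ (n + 1) := by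
        push_cast; ring
      rw [← e1, ← e2, add_smul, neg_smul]
      abel
  rw [pow_val_eq_one_iff, key]
  push_cast
  rw [CharP.cast_eq_zero, pow_mul, hl2]
  simp

lemma sl_sq_eq_one_iff (h2 : (2 : F) ≠ 0) (m : SpecialLinearGroup (Fin 2) F) :
    m ^ 2 = 1 ↔ m = 1 ∨ m = -1 := by
  constructor
  · intro hm
    have h1 := (pow_val_eq_one_iff m 2).mp hm
    rw [sq_eq] at h1
    have e00 := congrFun (congrFun h1 0) 0
    have e01 := congrFun (congrFun h1 0) 1
    have e10 := congrFun (congrFun h1 1) 0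
    have e11 := congrFun (congrFun h1 1) 1
    simp at e00 e01 e10 e11
    have hT : m 0 0 + m 1 1 ≠ 0 := by
      intro hT
      rw [hT] at e00
      exact h2 (by linear_combination -e00)
    have h01 := e01.resolve_left hT
    have h10 := e10.resolve_left hT
    have heq : m 0 0 = m 1 1 := mul_left_cancel₀ hT (by linear_combination e00 - e11)
    have hd := m.det_coe
    rw [det_fin_two, h01, h10, ← heq] at hd
    have : (m 0 0 - 1) * (m 0 0 + 1) = 0 := by linear_combination hd
    rcases mul_eq_zero.mp this with h | h
    · left
      have h00 : m 0 0 = 1 := by linear_combination h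
      ext i j
      fin_cases i <;> fin_cases j <;> simp [h01, h10, ← heq, h00]
    · right
      have h00 : m 0 0 = -1 := by linear_combination h
      ext i j
      fin_cases i <;> fin_cases j <;> simp [h01, h10, ← heq, h00]
  · rintro (rfl | rfl) <;> simp

end powers

/-! ### Fixed points of a single element -/

section fixed
variable {F : Type*} [Field F]

lemma quad_iff {l x T : F} (hl : l ≠ 0) (hT : T = l + l⁻¹) :
    x ^ 2 - T * x + 1 = 0 ↔ x = l ∨ x = l⁻¹ := by
  have : x ^ 2 - T * x + 1 = (x - l) * (x - l⁻¹) := by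
    have : l * l⁻¹ = 1 := mul_inv_cancel₀ hl
    rw [hT]; linear_combination -this
  rw [this, mul_eq_zero, sub_eq_zero, sub_eq_zero]

lemma sum_inv_iff {l x T : F} (hl : l ≠ 0) (hT : T = l + l⁻¹) (hx : x ≠ 0) :
    T = x + x⁻¹ ↔ x = l ∨ x = l⁻¹ := by
  rw [← quad_iff hl hT]
  constructor
  · intro h
    rw [h]; field_simp; ring
  · intro h
    field_simp
    linear_combination -h

lemma inv_eq_self_iff {l : F} (hl : l ≠ 0) : l⁻¹ = l ↔ l ^ 2 = 1 := by
  rw [pow_two, mul_eq_one_iff_eq_inv₀ hl, eq_comm]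

lemma pow_pred_eq_one_iff {l : F} (hl : l ≠ 0) {Q : ℕ} (hQ : 1 ≤ Q) :
    l ^ (Q - 1) = 1 ↔ l ^ Q = l := by
  obtain ⟨n, rfl⟩ := Nat.exists_eq_add_of_le hQ
  rw [Nat.add_sub_cancel_left, pow_add, pow_one]
  constructor
  · intro h; rw [h, mul_one]
  · intro h; exact mul_left_cancel₀ hl (by rw [h, mul_one])

lemma pow_succ_eq_one_iff {l : F} (hl : l ≠ 0) {Q : ℕ} :
    l ^ (Q + 1) = 1 ↔ l ^ Q = l⁻¹ := by
  rw [pow_succ, mul_eq_one_iff_eq_inv₀ hl]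

lemma two_mul_char_pow_ne_one (p : ℕ) [Fact p.Prime] [CharP F p]
    (m : SpecialLinearGroup (Fin 2) F) {l : F} (hl : l ≠ 0)
    (hT : m 0 0 + m 1 1 = l + l⁻¹) (hl2 : l ^ 2 ≠ 1) : m ^ (2 * p) ≠ 1 := by
  rw [Ne, pow_eq_one_iff m hl hT hl2, pow_mul]
  intro h
  apply hl2
  apply frobenius_inj F p
  simpa [frobenius_def] using h

/-- The special unitary group acts freely on the vectors of norm one. -/
lemma eq_one_of_fixed (σ : F →+* F) (hσσ : ∀ x, σ (σ x) = x)
    (m : SpecialLinearGroup (Fin 2) F) (h01 : m 0 1 = σ (m 1 0)) (h11 : m 1 1 = σ (m 0 0))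
    {x y : F} (hxy : x * σ x - y * σ y = 1) (h1 : m 0 0 * x + m 0 1 * y = x)
    (h2 : m 1 0 * x + m 1 1 * y = y) : m = 1 := by
  have h2' := congrArg σ h2
  rw [map_add, map_mul, map_mul, h11, hσσ, ← h01] at h2'
  have ha : m 0 0 = 1 := by
    linear_combination (σ x) * h1 - y * h2' - (m 0 0 - 1) * hxy
  have hb : m 0 1 = 0 := by
    linear_combination x * h2' - σ y * h1 - m 0 1 * hxy
  have hc : m 1 0 = 0 := by
    have := congrArg σ h01
    rw [hσσ, hb, map_zero] at this
    exact this.symm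
  ext i j
  fin_cases i <;> fin_cases j <;> simp [ha, hb, hc, h11]

variable [Fintype F]

/-- The number of eigenvalues in the field fixed by `x ↦ x ^ Q` is determined by which powers of
the matrix are trivial. -/
lemma card_roots (p : ℕ) [Fact p.Prime] [CharP F p] {Q : ℕ} (hQ : 1 ≤ Q)
    (σ : F →+* F) (hσ : ∀ x, σ x = x ^ Q)
    (m : SpecialLinearGroup (Fin 2) F) {l : F} (hl : l ≠ 0)
    (hT : m 0 0 + m 1 1 = l + l⁻¹) :
    #{x : F | x ^ Q = x ∧ x ^ 2 - (m 0 0 + m 1 1) * x + 1 = 0} =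
      if m ^ (2 * p) = 1 then 1 else if m ^ (Q - 1) = 1 then 2 else 0 := by
  by_cases hl2 : l ^ 2 = 1
  · have hinv := (inv_eq_self_iff hl).mpr hl2
    rw [if_pos (pow_two_mul_char p m hl2 (by rw [hT, hinv]; ring))]
    rw [card_eq_one]
    refine ⟨l, ?_⟩
    ext x
    simp only [mem_filter, mem_univ, true_and, mem_singleton]
    rw [quad_iff hl hT, hinv, or_self]
    constructor
    · exact fun h => h.2
    · rintro rfl
      refine ⟨?_, rfl⟩
      rw [← hσ]
      rcases (sq_eq_one_iff.mp hl2) with h | h <;> simp [h]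
  · rw [if_neg (two_mul_char_pow_ne_one p m hl hT hl2)]
    simp only [pow_eq_one_iff m hl hT hl2, pow_pred_eq_one_iff hl hQ, quad_iff hl hT]
    have hne : l ≠ l⁻¹ := fun h => hl2 ((inv_eq_self_iff hl).mp h.symm)
    split_ifs with h
    · rw [← card_pair hne]
      congr 1
      ext x
      simp only [mem_filter, mem_univ, true_and, mem_insert, mem_singleton]
      constructor
      · exact fun h => h.2
      · intro hx
        refine ⟨?_, hx⟩
        rcases hx with rfl | rfl
        · exact h
        · rw [inv_pow, h]
    · rw [card_eq_zero, filter_eq_empty_iff]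
      rintro x - ⟨h1, rfl | rfl⟩
      · exact h h1
      · rw [inv_pow, _root_.inv_inj] at h1; exact h h1

/-- A nontrivial element of order dividing `w` has two eigenvalues of order dividing `w`, both
different from `1`; any other element has no such eigenvalue. -/
lemma card_eps (p : ℕ) [Fact p.Prime] [CharP F p] {w : ℕ} (hw : Odd w) (hwp : Nat.Coprime w p)
    (m : SpecialLinearGroup (Fin 2) F) {l : F} (hl : l ≠ 0)
    (hT : m 0 0 + m 1 1 = l + l⁻¹) :
    #{e : F | e ^ w = 1 ∧ e ≠ 1 ∧ m 0 0 + m 1 1 = e + e⁻¹} =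
      if m ≠ 1 ∧ m ^ w = 1 then 2 else 0 := by
  have hw0 : w ≠ 0 := hw.pos.ne'
  have hset : ∀ e : F, (e ^ w = 1 ∧ e ≠ 1 ∧ m 0 0 + m 1 1 = e + e⁻¹) ↔
      (e ^ w = 1 ∧ e ≠ 1 ∧ (e = l ∨ e = l⁻¹)) := by
    intro e
    constructor
    · rintro ⟨h1, h2, h3⟩
      have he : e ≠ 0 := by rintro rfl; simp [hw0] at h1
      exact ⟨h1, h2, (sum_inv_iff hl hT he).mp h3⟩
    · rintro ⟨h1, h2, h3⟩
      have he : e ≠ 0 := by rintro rfl; simp [hw0] at h1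
      exact ⟨h1, h2, (sum_inv_iff hl hT he).mpr h3⟩
  simp only [hset]
  by_cases hl2 : l ^ 2 = 1
  · have hinv := (inv_eq_self_iff hl).mpr hl2
    have h2p := pow_two_mul_char p m hl2 (by rw [hT, hinv]; ring)
    rw [if_neg, card_eq_zero, filter_eq_empty_iff]
    · rintro x - ⟨h1, h2, h3⟩
      rw [hinv, or_self] at h3
      subst h3
      apply h2
      obtain ⟨n, rfl⟩ := hw
      rwa [pow_succ, pow_mul, hl2, one_pow, one_mul] at h1
    · rintro ⟨h1, h2⟩
      apply h1
      have hd := Nat.dvd_gcd (orderOf_dvd_of_pow_eq_one h2) (orderOf_dvd_of_pow_eq_one h2p)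
      have hc : Nat.Coprime w (2 * p) := Nat.Coprime.mul_right hw.coprime_two_right hwp
      rw [hc] at hd
      exact orderOf_eq_one_iff.mp (Nat.dvd_one.mp hd)
  · have hm1 : m ≠ 1 := by
      intro h
      have := (pow_eq_one_iff m hl hT hl2 1).mp (by simpa using h)
      exact hl2 (by rw [pow_one] at this; rw [this, one_pow])
    have hl1 : l ≠ 1 := by rintro rfl; simp at hl2
    have hne : l ≠ l⁻¹ := fun h => hl2 ((inv_eq_self_iff hl).mp h.symm)
    simp only [pow_eq_one_iff m hl hT hl2, ne_eq, hm1, not_false_eq_true, true_and]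
    split_ifs with h
    · rw [← card_pair hne]
      congr 1
      ext x
      simp only [mem_filter, mem_univ, true_and, mem_insert, mem_singleton]
      constructor
      · exact fun h => h.2.2
      · intro hx
        refine ⟨?_, ?_, hx⟩
        · rcases hx with rfl | rfl
          · exact h
          · rw [inv_pow, h, inv_one]
        · rcases hx with rfl | rfl
          · exact hl1
          · simpa using hl1
    · rw [card_eq_zero, filter_eq_empty_iff]
      rintro x - ⟨h1, -, rfl | rfl⟩
      · exact h h1
      · rw [inv_pow, inv_eq_one] at h1; exact h h1

/-- Isotropic eigenlines `(1 : t)` of a special unitary matrix, counted through their eigenvalues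
`m 0 0 + m 0 1 * t`, which lie in the fixed field of `σ`. -/
lemma card_inf (p : ℕ) [Fact p.Prime] [CharP F p] {q : ℕ} (hq : 1 ≤ q)
    (hF : Fintype.card F = q ^ 2) (h2 : (2 : F) ≠ 0)
    (σ : F →+* F) (hσ : ∀ x, σ x = x ^ q) (hσσ : ∀ x, σ (σ x) = x)
    (m : SpecialLinearGroup (Fin 2) F) (h01 : m 0 1 = σ (m 1 0)) (h11 : m 1 1 = σ (m 0 0)) :
    #{t : F | t ^ (q + 1) = 1 ∧ m 1 0 + m 1 1 * t = t * (m 0 0 + m 0 1 * t)} =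
      if m ^ 2 = 1 then q + 1 else
        if m ^ (2 * p) = 1 then 1 else if m ^ (q - 1) = 1 then 2 else 0 := by
  have hT : σ (m 0 0 + m 1 1) = m 0 0 + m 1 1 := by
    rw [map_add, h11, hσσ, add_comm]
  have hd := m.det_coe
  rw [det_fin_two] at hd
  by_cases hc : m 1 0 = 0
  · have h01' : m 0 1 = 0 := by rw [h01, hc, map_zero]
    rw [hc, h01', mul_zero, sub_zero] at hd
    have ha : m 0 0 ≠ 0 := left_ne_zero_of_mul_eq_one hd
    have h11' : m 1 1 = (m 0 0)⁻¹ := eq_inv_of_mul_eq_one_right hd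
    by_cases ha2 : (m 0 0) ^ 2 = 1
    · have hinv := (inv_eq_self_iff ha).mpr ha2
      have hm2 : m ^ 2 = 1 := by
        rw [pow_val_eq_one_iff, pow_two]
        ext i j
        fin_cases i <;> fin_cases j <;>
          simp [Matrix.mul_apply, Fin.sum_univ_two, hc, h01', h11', hinv, ← pow_two, ha2]
      rw [if_pos hm2]
      refine Eq.trans ?_ (card_norm_eq hF (X := 1) one_ne_zero (one_pow _))
      congr 1
      ext t
      simp only [mem_filter, mem_univ, true_and, hc, h01', h11', hinv]
      constructor
      · exact fun h => h.1
      · exact fun h => ⟨h, by ring⟩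
    · have hT' : m 0 0 + m 1 1 = m 0 0 + (m 0 0)⁻¹ := by rw [h11']
      have hne : (m 0 0)⁻¹ ≠ m 0 0 := fun h => ha2 ((inv_eq_self_iff ha).mp h)
      rw [if_neg, if_neg (two_mul_char_pow_ne_one p m ha hT' ha2), if_neg, card_eq_zero,
        filter_eq_empty_iff]
      · rintro t - ⟨h1, h2⟩
        rw [hc, h01', h11'] at h2
        have ht : t ≠ 0 := by rintro rfl; simp at h1
        exact hne (mul_right_cancel₀ ht (by linear_combination h2))
      · rw [pow_eq_one_iff m ha hT' ha2, pow_pred_eq_one_iff ha hq, ← hσ, ← h11, h11']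
        exact hne
      · rw [pow_eq_one_iff m ha hT' ha2]; exact ha2
  · have hm2 : m ^ 2 ≠ 1 := by
      intro h
      rcases (sl_sq_eq_one_iff h2 m).mp h with h | h <;> rw [h] at hc <;> simp at hc
    rw [if_neg hm2]
    obtain ⟨l, hl, hTl⟩ := exists_root hF σ hσ h2 hT
    rw [← card_roots p hq σ hσ m hl hTl]
    have hc' : m 0 1 ≠ 0 := by
      rw [h01]; exact (map_ne_zero σ).mpr hc
    have hN : ∀ t : F, t ^ (q + 1) = t * σ t := fun t => by rw [pow_succ', hσ]
    refine Finset.card_bij (fun t _ => m 0 0 + m 0 1 * t) ?_ ?_ ?_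
    · intro t ht
      simp only [mem_filter, mem_univ, true_and] at ht ⊢
      obtain ⟨h1, h3⟩ := ht
      rw [hN] at h1
      have ht0 : t ≠ 0 := left_ne_zero_of_mul_eq_one h1
      refine ⟨?_, ?_⟩
      · rw [← hσ, map_add, map_mul, h01, hσσ, ← h01, ← h11]
        apply mul_left_cancel₀ ht0
        linear_combination h3 + m 1 0 * h1
      · linear_combination (-m 0 1) * h3 - hd
    · intro t _ t' _ h
      exact mul_left_cancel₀ hc' (add_left_cancel h)
    · intro x hx
      simp only [mem_filter, mem_univ, true_and] at hx ⊢
      obtain ⟨h1, h3⟩ := hx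
      rw [← hσ] at h1
      refine ⟨(x - m 0 0) / m 0 1, ⟨?_, ?_⟩, by field_simp; ring⟩
      · rw [hN, map_div₀, map_sub, h1, h01, hσσ, ← h01, ← h11]
        field_simp
        linear_combination h3 + hd
      · field_simp
        linear_combination (-1) * h3 - hd

lemma card_affine {q : ℕ} (hq : 1 ≤ q) (hF : Fintype.card F = q ^ 2)
    (σ : F →+* F) (hσ : ∀ x, σ x = x ^ q) (hσσ : ∀ x, σ (σ x) = x) :
    #{v : F × F | v.1 ^ (q + 1) - v.2 ^ (q + 1) = 1} = q ^ 3 - q := by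
  have hN : ∀ t : F, t ^ (q + 1) = t * σ t := fun t => by rw [pow_succ', hσ]
  have hneg : #{y : F | y ^ (q + 1) = -1} = q + 1 :=
    card_norm_eq hF (neg_ne_zero.mpr one_ne_zero) (by rw [← hσ, map_neg, map_one])
  have h1 : #{v : F × F | v.1 ^ (q + 1) - v.2 ^ (q + 1) = 1} =
      ∑ y : F, #{x : F | x ^ (q + 1) = 1 + y ^ (q + 1)} := by
    rw [card_filter, Fintype.sum_prod_type_right]
    refine sum_congr rfl fun y _ => ?_
    rw [card_filter]
    refine sum_congr rfl fun x _ => ?_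
    simp only [sub_eq_iff_eq_add]
  have h2 : ∀ y : F, #{x : F | x ^ (q + 1) = 1 + y ^ (q + 1)} =
      if y ^ (q + 1) = -1 then 1 else q + 1 := by
    intro y
    split_ifs with h
    · rw [h, card_eq_one]
      exact ⟨0, by ext x; simp⟩
    · apply card_norm_eq hF
      · intro hc; exact h (by linear_combination hc)
      · rw [← hσ, map_add, map_one, hN, map_mul, hσσ, mul_comm]
  rw [h1, sum_congr rfl fun y _ => h2 y, sum_ite, sum_const, sum_const, hneg]
  have h3 := card_filter_add_card_filter_not (s := (univ : Finset F)) (fun y => y ^ (q + 1) = -1)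
  rw [hneg, card_univ, hF] at h3
  rw [smul_eq_mul, smul_eq_mul]
  obtain ⟨n, rfl⟩ := Nat.exists_eq_add_of_le hq
  have h4 : #{y : F | ¬ y ^ (1 + n + 1) = -1} = n ^ 2 + n - 1 := by
    have : (1 + n) ^ 2 = n ^ 2 + n + n + 1 := by ring
    omega
  rw [h4]
  rcases Nat.eq_zero_or_pos n with rfl | hn
  · simp at hF
    have := Fintype.one_lt_card (α := F)
    omega
  · have e : 1 ≤ n ^ 2 + n := by omega
    zify [e, show 1 + n ≤ (1 + n) ^ 3 from Nat.le_self_pow (by norm_num) _]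
    ring

/-- An elliptic special unitary matrix with eigenvalue `u` has exactly `q + 1` eigenvectors of
norm one for `u`. -/
lemma card_eigen {q : ℕ} (hF : Fintype.card F = q ^ 2)
    (σ : F →+* F) (hσ : ∀ x, σ x = x ^ q) (hσσ : ∀ x, σ (σ x) = x)
    (m : SpecialLinearGroup (Fin 2) F) (h01 : m 0 1 = σ (m 1 0)) (h11 : m 1 1 = σ (m 0 0))
    {u v : F} (huv : u * v = 1) (hu : σ u = v) (huv' : u ≠ v) (hT : m 0 0 + m 1 1 = u + v) :
    #{z : F × F | z.1 ^ (q + 1) - z.2 ^ (q + 1) = 1 ∧ m 0 0 * z.1 + m 0 1 * z.2 = u * z.1 ∧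
      m 1 0 * z.1 + m 1 1 * z.2 = u * z.2} = q + 1 := by
  have hN : ∀ t : F, t ^ (q + 1) = t * σ t := fun t => by rw [pow_succ', hσ]
  have hv : σ v = u := by rw [← hu, hσσ]
  have hd := m.det_coe
  rw [det_fin_two] at hd
  have hne : u - v ≠ 0 := sub_ne_zero.mpr huv'
  have h10 : m 1 0 = σ (m 0 1) := by rw [h01, hσσ]
  by_cases ha : m 0 0 = v
  · have h11' : m 1 1 = u := by linear_combination hT - ha
    have hb : m 0 1 = 0 := by
      have : m 0 1 * σ (m 0 1) = 0 := by
        rw [← h10]; rw [ha, h11'] at hd; linear_combination huv - hd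
      rcases mul_eq_zero.mp this with h | h
      · exact h
      · exact (map_eq_zero σ).mp h
    have hc : m 1 0 = 0 := by rw [h10, hb, map_zero]
    refine Eq.trans (Eq.symm ?_) (card_norm_eq hF (X := (-1 : F))
      (neg_ne_zero.mpr one_ne_zero) (by rw [← hσ, map_neg, map_one]))
    refine Finset.card_bij (fun y _ => ((0 : F), y)) ?_ ?_ ?_
    · intro y hy
      simp only [mem_filter, mem_univ, true_and] at hy ⊢
      refine ⟨by rw [hy]; simp, by rw [hb]; ring, by rw [h11']; ring⟩
    · intro y _ y' _ h
      exact (Prod.ext_iff.mp h).2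
    · rintro ⟨x, y⟩ hz
      simp only [mem_filter, mem_univ, true_and] at hz ⊢
      obtain ⟨h1, h2, h3⟩ := hz
      rw [ha, hb] at h2
      have hx : x = 0 := by
        have : (u - v) * x = 0 := by linear_combination -h2
        exact (mul_eq_zero.mp this).resolve_left hne
      subst hx
      refine ⟨y, ?_, rfl⟩
      simp at h1
      rw [← h1]; ring
  · have hav : m 0 0 - v ≠ 0 := sub_ne_zero.mpr ha
    have hX : (m 0 0 - v) / (u - v) ≠ 0 := div_ne_zero hav hne
    have hσX : ((m 0 0 - v) / (u - v)) ^ q = (m 0 0 - v) / (u - v) := by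
      rw [← hσ, map_div₀, map_sub, map_sub, hu, hv, ← h11]
      have hne' : v - u ≠ 0 := sub_ne_zero.mpr huv'.symm
      field_simp
      linear_combination (u - v) * hT
    refine Eq.trans (Eq.symm ?_) (card_norm_eq hF hX hσX)
    -- from `σ` of the second equation, the second coordinate is forced by the first
    refine Finset.card_bij (fun x _ => (x, m 1 0 * x / (m 0 0 - v))) ?_ ?_ ?_
    · intro x hx
      simp only [mem_filter, mem_univ, true_and] at hx ⊢
      rw [hN] at hx
      have hkey : m 0 1 * m 1 0 = (u - m 0 0) * (m 0 0 - v) := by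
        linear_combination m 0 0 * hT - hd + huv
      have hσa : σ (m 0 0 - v) = -(m 0 0 - v) := by
        rw [map_sub, hv, ← h11]; linear_combination hT
      refine ⟨?_, ?_, ?_⟩
      · have e : m 1 0 * x / (m 0 0 - v) * (m 0 1 * σ x / -(m 0 0 - v)) =
          -((m 0 1 * m 1 0) * (x * σ x) / ((m 0 0 - v) * (m 0 0 - v))) := by
          field_simp
        rw [hN, hN, map_div₀, map_mul, hσa, ← h01, e, hkey, hx]
        field_simp
        ring
      · field_simp
        linear_combination x * hkey
      · have : m 1 1 = u + v - m 0 0 := by linear_combination hT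
        rw [this]
        field_simp
        ring
    · intro y _ y' _ h
      exact (Prod.ext_iff.mp h).1
    · rintro ⟨x, y⟩ hz
      simp only [mem_filter, mem_univ, true_and] at hz ⊢
      obtain ⟨h1, h2, h3⟩ := hz
      have hy : y = m 1 0 * x / (m 0 0 - v) := by
        field_simp
        linear_combination (-1) * h3 + y * hT
      refine ⟨x, ?_, by rw [← hy]⟩
      rw [hN, hN] at h1
      rw [hN]
      have h3' := congrArg σ h3
      rw [map_add, map_mul, map_mul, map_mul, hu, ← h01, h11, hσσ] at h3'
      field_simp
      linear_combination (m 0 0 - v) * h1 + (-σ x) * h2 + y * h3'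
end fixed

/-! ### Counting in `SL₂` over the small field -/

section small
variable {E : Type*} [Field E] [Fintype E]

/-- The number of roots in `E` of `X ^ 2 - T * X + 1`. -/
noncomputable def nRoots (T : E) : ℕ := #{x : E | x ^ 2 - T * x + 1 = 0}

lemma card_mul_eq (u : E) : #{v : E × E | v.1 * v.2 = u} + 1 =
    Fintype.card E + if u = 0 then Fintype.card E else 0 := by
  have h1 : #{v : E × E | v.1 * v.2 = u} = ∑ b : E, #{c : E | b * c = u} := by
    rw [card_filter, Fintype.sum_prod_type]
    exact sum_congr rfl fun b _ => (card_filter _ _).symm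
  have h2 : ∀ b : E, b ≠ 0 → #{c : E | b * c = u} = 1 := by
    intro b hb
    rw [card_eq_one]
    refine ⟨u / b, ?_⟩
    ext c
    simp only [mem_filter, mem_univ, true_and, mem_singleton]
    rw [eq_div_iff hb, mul_comm]
  have h3 : #{c : E | (0 : E) * c = u} = if u = 0 then Fintype.card E else 0 := by
    split_ifs with h
    · simp [h]
    · simp [eq_comm, h]
  rw [h1, ← add_sum_erase univ _ (mem_univ (0 : E)), h3,
    sum_congr rfl fun b hb => h2 b (ne_of_mem_erase hb), sum_const, card_erase_of_mem (mem_univ _),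
    card_univ, smul_eq_mul, mul_one]
  have := Fintype.card_pos (α := E)
  omega

/-- The number of elements of `SL₂(E)` of given trace. -/
lemma card_trace (T : E) : #{m : SpecialLinearGroup (Fin 2) E | m 0 0 + m 1 1 = T} =
    Fintype.card E * (Fintype.card E - 1) + Fintype.card E * nRoots T := by
  have h1 : #{m : SpecialLinearGroup (Fin 2) E | m 0 0 + m 1 1 = T} =
      #{z : E × (E × E) | z.2.1 * z.2.2 = z.1 * (T - z.1) - 1} := by
    refine Finset.card_bij (fun m _ => (m 0 0, (m 0 1, m 1 0))) ?_ ?_ ?_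
    · intro m hm
      simp only [mem_filter, mem_univ, true_and] at hm ⊢
      have hd := m.det_coe
      rw [det_fin_two] at hd
      rw [← hm]
      linear_combination -hd
    · intro m hm m' hm' h
      simp only [mem_filter, mem_univ, true_and] at hm hm'
      simp only [Prod.mk.injEq] at h
      obtain ⟨h00, h01, h10⟩ := h
      have h11 : m 1 1 = m' 1 1 := by linear_combination hm - hm' - h00
      ext i j
      fin_cases i <;> fin_cases j <;> simp [h00, h01, h10, h11]
    · rintro ⟨a, b, c⟩ hz
      simp only [mem_filter, mem_univ, true_and] at hz
      refine ⟨⟨!![a, b; c, T - a], ?_⟩, ?_, ?_⟩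
      · rw [det_fin_two_of]; linear_combination -hz
      · refine mem_filter.mpr ⟨mem_univ _, ?_⟩
        change a + (T - a) = T
        ring
      · rfl
  have h2 : #{z : E × (E × E) | z.2.1 * z.2.2 = z.1 * (T - z.1) - 1} =
      ∑ a : E, #{v : E × E | v.1 * v.2 = a * (T - a) - 1} := by
    rw [card_filter, Fintype.sum_prod_type]
    exact sum_congr rfl fun b _ => (card_filter _ _).symm
  have hpos := Fintype.card_pos (α := E)
  have h3 : ∀ a : E, #{v : E × E | v.1 * v.2 = a * (T - a) - 1} =
      (Fintype.card E - 1) + Fintype.card E * if a ^ 2 - T * a + 1 = 0 then 1 else 0 := by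
    intro a
    have := card_mul_eq (a * (T - a) - 1)
    have e : a * (T - a) - 1 = 0 ↔ a ^ 2 - T * a + 1 = 0 := by
      constructor <;> intro h <;> linear_combination -h
    simp only [e] at this
    split_ifs at this ⊢ <;> omega
  rw [h1, h2, sum_congr rfl fun a _ => h3 a, sum_add_distrib, sum_const, ← mul_sum, nRoots,
    card_filter, card_univ, smul_eq_mul]

lemma sum_nRoots : ∑ T : E, nRoots T = Fintype.card E - 1 := by
  have h1 : ∑ T : E, nRoots T = ∑ x : E, #{T : E | x ^ 2 - T * x + 1 = 0} := by
    simp only [nRoots, card_filter]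
    exact sum_comm
  have h2 : ∀ x : E, x ≠ 0 → #{T : E | x ^ 2 - T * x + 1 = 0} = 1 := by
    intro x hx
    rw [card_eq_one]
    refine ⟨(x ^ 2 + 1) / x, ?_⟩
    ext T
    simp only [mem_filter, mem_univ, true_and, mem_singleton]
    rw [eq_div_iff hx]
    constructor <;> intro h <;> linear_combination -h
  rw [h1, ← add_sum_erase univ _ (mem_univ (0 : E)),
    sum_congr rfl fun b hb => h2 b (ne_of_mem_erase hb), sum_const, card_erase_of_mem (mem_univ _),
    card_univ, smul_eq_mul, mul_one]
  simp

lemma card_SL2 : Fintype.card (SpecialLinearGroup (Fin 2) E) =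
    Fintype.card E * (Fintype.card E - 1) * (Fintype.card E + 1) := by
  rw [← card_univ, card_eq_sum_card_fiberwise (f := fun m : SpecialLinearGroup (Fin 2) E =>
    m 0 0 + m 1 1) (t := univ) (by simp), sum_congr rfl fun T _ => card_trace T, sum_add_distrib,
    sum_const, ← mul_sum, sum_nRoots, card_univ, smul_eq_mul]
  ring

lemma card_sq_eq_one (h2 : (2 : E) ≠ 0) :
    #{m : SpecialLinearGroup (Fin 2) E | m ^ 2 = 1} = 2 := by
  have hne : (1 : SpecialLinearGroup (Fin 2) E) ≠ -1 := by
    intro h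
    have := congrArg (fun m : SpecialLinearGroup (Fin 2) E => m 0 0) h
    simp at this
    exact h2 (by linear_combination this)
  refine Eq.trans (congrArg Finset.card ?_) (card_pair hne)
  ext m
  simp [sl_sq_eq_one_iff h2]

lemma sum_sl_trace (f : E → ℕ) : ∑ m : SpecialLinearGroup (Fin 2) E, f (m 0 0 + m 1 1) =
    ∑ T : E, (Fintype.card E * (Fintype.card E - 1) + Fintype.card E * nRoots T) * f T := by
  rw [← sum_fiberwise_of_maps_to (t := univ) (g := fun m : SpecialLinearGroup (Fin 2) E =>
    m 0 0 + m 1 1) (by simp)]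
  refine sum_congr rfl fun T _ => ?_
  rw [← card_trace, sum_congr rfl (g := fun _ => f T), sum_const, smul_eq_mul]
  intro m hm
  rw [(mem_filter.mp hm).2]

lemma nRoots_inv {x : E} (hx : x ≠ 0) :
    nRoots (x + x⁻¹) + (if x ^ 2 = 1 then 1 else 0) = 2 := by
  rw [nRoots]
  simp only [quad_iff hx rfl]
  split_ifs with h
  · rw [(inv_eq_self_iff hx).mpr h]
    have : #{y : E | y = x ∨ y = x} = 1 := card_eq_one.mpr ⟨x, by ext y; simp⟩
    rw [this]
  · have hne : x ≠ x⁻¹ := fun hc => h ((inv_eq_self_iff hx).mp hc.symm)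
    rw [add_zero]
    refine Eq.trans (congrArg Finset.card ?_) (card_pair hne)
    ext y
    simp

lemma nRoots_le (T : E) : nRoots T = 0 ∨ nRoots T = 1 ∨ nRoots T = 2 := by
  rcases Nat.eq_zero_or_pos (nRoots T) with h | h
  · exact Or.inl h
  · obtain ⟨x, hx⟩ := card_pos.mp h
    simp only [mem_filter, mem_univ, true_and] at hx
    have hx0 : x ≠ 0 := by rintro rfl; simp at hx
    have hT : T = x + x⁻¹ := by field_simp; linear_combination -hx
    have := nRoots_inv hx0
    rw [hT]
    split_ifs at this <;> omega

lemma sum_nRoots_sq (h2 : (2 : E) ≠ 0) : ∑ T : E, nRoots T * nRoots T + 4 =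
    2 * Fintype.card E := by
  have h1 : ∑ T : E, nRoots T * nRoots T =
      ∑ x : E, ∑ T : E, if x ^ 2 - T * x + 1 = 0 then nRoots T else 0 := by
    rw [sum_comm]
    refine sum_congr rfl fun T _ => ?_
    rw [← sum_filter, sum_const, smul_eq_mul]
    rfl
  have h3 : ∀ x : E, x ≠ 0 →
      (∑ T : E, if x ^ 2 - T * x + 1 = 0 then nRoots T else 0) = nRoots (x + x⁻¹) := by
    intro x hx
    have e : ∀ T : E, x ^ 2 - T * x + 1 = 0 ↔ T = x + x⁻¹ := by
      intro T
      constructor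
      · intro h; field_simp; linear_combination -h
      · rintro rfl; field_simp; ring
    simp only [e]
    simp
  have h4 : #{x ∈ univ.erase (0 : E) | x ^ 2 = 1} = 2 := by
    have hne : (1 : E) ≠ -1 := by
      intro h; exact h2 (by linear_combination h)
    refine Eq.trans (congrArg Finset.card ?_) (card_pair hne)
    ext x
    simp only [mem_filter, mem_erase, mem_univ, and_true, mem_insert, mem_singleton,
      sq_eq_one_iff]
    constructor
    · exact fun h => h.2
    · rintro (rfl | rfl) <;> simp
  have h5 : ∑ x ∈ univ.erase (0 : E), nRoots (x + x⁻¹) + 2 = 2 * (Fintype.card E - 1) := by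
    have h6 := sum_congr rfl fun x (hx : x ∈ univ.erase (0 : E)) => nRoots_inv (ne_of_mem_erase hx)
    rw [sum_add_distrib, ← card_filter, h4, sum_const, card_erase_of_mem (mem_univ _), card_univ,
      smul_eq_mul, mul_comm _ 2] at h6
    exact h6
  rw [h1, ← add_sum_erase univ _ (mem_univ (0 : E)),
    sum_congr rfl fun x hx => h3 x (ne_of_mem_erase hx)]
  have := Fintype.one_lt_card (α := E)
  simp
  omega

lemma card_nRoots_eq_one (h2 : (2 : E) ≠ 0) : #{T : E | nRoots T = 1} = 2 := by
  have h1 : #{T : E | nRoots T = 1} + ∑ T : E, nRoots T * nRoots T = 2 * ∑ T : E, nRoots T := by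
    rw [card_filter, ← sum_add_distrib, mul_sum]
    refine sum_congr rfl fun T _ => ?_
    rcases nRoots_le T with h | h | h <;> simp [h]
  rw [sum_nRoots] at h1
  have h3 := sum_nRoots_sq h2
  have := Fintype.one_lt_card (α := E)
  omega

lemma sum_sl_nRoots (h2 : (2 : E) ≠ 0) :
    ∑ m : SpecialLinearGroup (Fin 2) E, nRoots (m 0 0 + m 1 1) + 3 * Fintype.card E =
      Fintype.card E ^ 3 := by
  rw [sum_sl_trace]
  simp only [add_mul, sum_add_distrib, mul_assoc]
  rw [← mul_sum, ← mul_sum, ← mul_sum, sum_nRoots]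
  have h3 := sum_nRoots_sq h2
  have h1 := Fintype.card_pos (α := E)
  zify [h1] at h3 ⊢
  linear_combination (Fintype.card E : ℤ) * h3

lemma card_sl_nRoots (h2 : (2 : E) ≠ 0) :
    #{m : SpecialLinearGroup (Fin 2) E | nRoots (m 0 0 + m 1 1) = 1} =
      2 * Fintype.card E ^ 2 := by
  rw [card_filter, sum_sl_trace (fun T => if nRoots T = 1 then 1 else 0)]
  have h1 := Fintype.card_pos (α := E)
  have : ∀ T : E, (Fintype.card E * (Fintype.card E - 1) + Fintype.card E * nRoots T) *
      (if nRoots T = 1 then 1 else 0) = Fintype.card E ^ 2 * if nRoots T = 1 then 1 else 0 := by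
    intro T
    split_ifs with h
    · rw [h]; zify [h1]; ring
    · simp
  rw [sum_congr rfl fun T _ => this T, ← mul_sum, ← card_filter, card_nRoots_eq_one h2, mul_comm]
end small

/-! ### Element orders in `SL₂(E)`, seen in the larger field `F` -/

lemma eq_one_of_sq_of_odd {G : Type*} [Monoid G] {e : G} {w : ℕ} (hw : Odd w) (h2 : e ^ 2 = 1)
    (hew : e ^ w = 1) : e = 1 := by
  obtain ⟨j, rfl⟩ := hw
  rwa [pow_succ, pow_mul, h2, one_pow, one_mul] at hew

lemma pow_eq_one_of_dvd {G : Type*} [Monoid G] {e : G} {a b : ℕ} (h : e ^ a = 1) (hab : a ∣ b) :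
    e ^ b = 1 := by
  obtain ⟨c, rfl⟩ := hab
  rw [pow_mul, h, one_pow]

section transfer
variable {E F : Type*} [Field E] [Field F]

lemma map_pow_eq_one_iff (i : E →+* F) (m : SpecialLinearGroup (Fin 2) E) (n : ℕ) :
    (SpecialLinearGroup.map i m) ^ n = 1 ↔ m ^ n = 1 := by
  have hinj : Function.Injective (SpecialLinearGroup.map (n := Fin 2) i) := by
    intro a b hab
    ext r s
    exact i.injective (congrArg (fun m : SpecialLinearGroup (Fin 2) F => m r s) hab)
  rw [← map_pow, map_eq_one_iff _ hinj]

variable [Fintype E]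

lemma pow_card_eq_self_iff (i : E →+* F) (x : F) :
    x ^ Fintype.card E = x ↔ ∃ y : E, i y = x := by
  have hP : 1 < Fintype.card E := Fintype.one_lt_card
  constructor
  · intro hx
    have hne : (Polynomial.X ^ Fintype.card E - Polynomial.X : Polynomial F) ≠ 0 :=
      FiniteField.X_pow_card_sub_X_ne_zero F hP
    have hsub : univ.image i ⊆
        (Polynomial.X ^ Fintype.card E - Polynomial.X : Polynomial F).roots.toFinset := by
      intro z hz
      obtain ⟨y, -, rfl⟩ := mem_image.mp hz
      simp [hne, ← map_pow, FiniteField.pow_card]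
    have hcard : (Polynomial.X ^ Fintype.card E - Polynomial.X : Polynomial F).roots.toFinset.card
        ≤ (univ.image i).card := by
      rw [card_image_of_injective _ i.injective, card_univ]
      refine (Multiset.toFinset_card_le _).trans ((Polynomial.card_roots' _).trans ?_)
      rw [FiniteField.X_pow_card_sub_X_natDegree_eq F hP]
    have hmem : x ∈ univ.image i := by
      rw [eq_of_subset_of_card_le hsub hcard]
      simp [hne, hx]
    obtain ⟨y, -, hy⟩ := mem_image.mp hmem
    exact ⟨y, hy⟩
  · rintro ⟨y, rfl⟩
    rw [← map_pow, FiniteField.pow_card]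

/-- The sum over `SL₂(E)` of the numbers of fixed points at infinity splits off the two central
elements, which fix all `q + 1` points. -/
lemma sum_inf_eq (p q : ℕ) (h2 : (2 : E) ≠ 0) :
    ∑ m : SpecialLinearGroup (Fin 2) E, (if m ^ 2 = 1 then q + 1 else
      if m ^ (2 * p) = 1 then 1 else if m ^ (q - 1) = 1 then 2 else 0) = 2 * q +
    ∑ m : SpecialLinearGroup (Fin 2) E,
      (if m ^ (2 * p) = 1 then 1 else if m ^ (q - 1) = 1 then 2 else 0) := by
  have h : ∀ m : SpecialLinearGroup (Fin 2) E, (if m ^ 2 = 1 then q + 1 else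
      if m ^ (2 * p) = 1 then 1 else if m ^ (q - 1) = 1 then 2 else 0) =
      (if m ^ 2 = 1 then 1 else 0) * q +
      (if m ^ (2 * p) = 1 then 1 else if m ^ (q - 1) = 1 then 2 else 0) := by
    intro m
    by_cases hm : m ^ 2 = 1
    · have : m ^ (2 * p) = 1 := by rw [pow_mul, hm, one_pow]
      simp [hm, this]
    · simp [hm]
  rw [sum_congr rfl fun m _ => h m, sum_add_distrib, ← sum_mul, ← card_filter, card_sq_eq_one h2]

variable [Fintype F]

lemma nRoots_transfer (i : E →+* F) (T : E) :
    nRoots T = #{x : F | x ^ Fintype.card E = x ∧ x ^ 2 - i T * x + 1 = 0} := by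
  have key : ∀ y : E, (i y) ^ 2 - i T * i y + 1 = 0 ↔ y ^ 2 - T * y + 1 = 0 := by
    intro y
    rw [← map_eq_zero_iff i i.injective (x := y ^ 2 - T * y + 1)]
    simp
  refine Finset.card_bij (fun y _ => i y) ?_ (fun _ _ _ _ h => i.injective h) ?_
  · intro y hy
    simp only [mem_filter, mem_univ, true_and] at hy ⊢
    exact ⟨(pow_card_eq_self_iff i _).mpr ⟨y, rfl⟩, (key y).mpr hy⟩
  · intro x hx
    simp only [mem_filter, mem_univ, true_and] at hx
    obtain ⟨y, rfl⟩ := (pow_card_eq_self_iff i x).mp hx.1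
    exact ⟨y, by simpa using (key y).mp hx.2, rfl⟩

variable (p : ℕ) [Fact p.Prime] [CharP F p] {k r q : ℕ}

/-- Every trace of an element of `SL₂(E)` is of the form `l + l⁻¹` with `l` in `F`. -/
lemma exists_root_map (hE : Fintype.card E = p ^ k) (hq : q = Fintype.card E ^ r)
    (hF : Fintype.card F = q ^ 2) (h2 : (2 : F) ≠ 0) (i : E →+* F) (T : E) :
    ∃ l : F, l ≠ 0 ∧ i T = l + l⁻¹ ∧ (l ^ Fintype.card E = l ∨ l ^ Fintype.card E = l⁻¹) := by
  have hqp : q = p ^ (k * r) := by rw [hq, hE, pow_mul]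
  have hTq : T ^ q = T := by rw [hq, FiniteField.pow_card_pow]
  obtain ⟨l, hl, hT⟩ := exists_root hF (iterateFrobenius F p (k * r))
    (fun x => by rw [iterateFrobenius_def, hqp]) h2 (T := i T)
    (by rw [iterateFrobenius_def, ← hqp, ← map_pow, hTq])
  refine ⟨l, hl, hT, ?_⟩
  rw [← quad_iff hl hT]
  have h := (quad_iff hl hT).mpr (Or.inl rfl)
  have h' := congrArg (iterateFrobenius F p k) h
  simp only [map_add, map_sub, map_mul, map_pow, map_one, map_zero] at h'
  simp only [iterateFrobenius_def, ← hE] at h'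
  rwa [← map_pow i, FiniteField.pow_card] at h'

/-- An element of `SL₂(E)` whose order does not divide `2 * p` has the same order as its
eigenvalues. -/
lemma exists_eigenvalue (hE : Fintype.card E = p ^ k) (hq : q = Fintype.card E ^ r)
    (hF : Fintype.card F = q ^ 2) (h2 : (2 : F) ≠ 0) (i : E →+* F)
    (m : SpecialLinearGroup (Fin 2) E) (hm : m ^ (2 * p) ≠ 1) :
    ∃ l : F, l ≠ 0 ∧ l ^ 2 ≠ 1 ∧ (l ^ Fintype.card E = l ∨ l ^ Fintype.card E = l⁻¹) ∧
      ∀ n, m ^ n = 1 ↔ l ^ n = 1 := by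
  obtain ⟨l, hl, hT, hlP⟩ := exists_root_map p hE hq hF h2 i (m 0 0 + m 1 1)
  have hT' : (SpecialLinearGroup.map i m) 0 0 + (SpecialLinearGroup.map i m) 1 1 = l + l⁻¹ := by
    rw [← hT, map_add]
    rfl
  have hl2 : l ^ 2 ≠ 1 := by
    intro hl2
    refine hm ((map_pow_eq_one_iff i m _).mp (pow_two_mul_char p _ hl2 ?_))
    rw [hT', (inv_eq_self_iff hl).mpr hl2, two_mul]
  exact ⟨l, hl, hl2, hlP, fun n => by
    rw [← map_pow_eq_one_iff i, pow_eq_one_iff _ hl hT' hl2]⟩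

lemma nRoots_eq (hE : Fintype.card E = p ^ k) (hq : q = Fintype.card E ^ r)
    (hF : Fintype.card F = q ^ 2) (h2 : (2 : F) ≠ 0) (i : E →+* F)
    (m : SpecialLinearGroup (Fin 2) E) :
    nRoots (m 0 0 + m 1 1) =
      if m ^ (2 * p) = 1 then 1 else if m ^ (Fintype.card E - 1) = 1 then 2 else 0 := by
  obtain ⟨l, hl, hT, hlP⟩ := exists_root_map p hE hq hF h2 i (m 0 0 + m 1 1)
  have hT'' : (SpecialLinearGroup.map i m) 0 0 + (SpecialLinearGroup.map i m) 1 1 =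
      i (m 0 0 + m 1 1) := by
    rw [map_add]
    rfl
  have := card_roots p (Q := Fintype.card E) Fintype.card_pos (iterateFrobenius F p k)
    (fun x => by rw [iterateFrobenius_def, hE]) (SpecialLinearGroup.map i m) hl (hT''.trans hT)
  rw [hT''] at this
  rw [nRoots_transfer i, this]
  simp only [map_pow_eq_one_iff]

lemma card_pow_two_mul_char (hE : Fintype.card E = p ^ k) (hq : q = Fintype.card E ^ r)
    (hF : Fintype.card F = q ^ 2) (h2 : (2 : F) ≠ 0) (i : E →+* F) :
    #{m : SpecialLinearGroup (Fin 2) E | m ^ (2 * p) = 1} = 2 * Fintype.card E ^ 2 := by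
  have h2E : (2 : E) ≠ 0 := fun h => h2 (by rw [← map_ofNat i 2, h, map_zero])
  rw [← card_sl_nRoots h2E]
  congr 1
  ext m
  simp only [mem_filter, mem_univ, true_and]
  rw [nRoots_eq p hE hq hF h2 i m]
  split_ifs <;> simp_all

/-- For odd `r` the elements of order dividing `q - 1` but not `2 * p` are those split over `E`, so
the noncentral elements are counted by the numbers of their eigenvalues in `E`. -/
lemma sum_inf_odd (hE : Fintype.card E = p ^ k) (hq : q = Fintype.card E ^ r)
    (hF : Fintype.card F = q ^ 2) (h2 : (2 : F) ≠ 0) (i : E →+* F) (hr : Odd r) :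
    ∑ m : SpecialLinearGroup (Fin 2) E, (if m ^ 2 = 1 then q + 1 else
      if m ^ (2 * p) = 1 then 1 else if m ^ (q - 1) = 1 then 2 else 0) + 3 * Fintype.card E =
    2 * q + Fintype.card E ^ 3 := by
  have h2E : (2 : E) ≠ 0 := fun h => h2 (by rw [← map_ofNat i 2, h, map_zero])
  rw [sum_inf_eq p q h2E, ← sum_sl_nRoots h2E, add_assoc]
  congr 2
  refine sum_congr rfl fun m _ => ?_
  rw [nRoots_eq p hE hq hF h2 i m]
  by_cases hm : m ^ (2 * p) = 1
  · simp [hm]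
  obtain ⟨l, hl, hl2, hlP, hn⟩ := exists_eigenvalue p hE hq hF h2 i m hm
  have key : m ^ (q - 1) = 1 ↔ m ^ (Fintype.card E - 1) = 1 := by
    rw [hn, hn]
    have hdvd : Fintype.card E - 1 ∣ q - 1 := by
      simpa [hq] using Nat.sub_dvd_pow_sub_pow (Fintype.card E) 1 r
    constructor
    · intro h
      rcases hlP with h' | h'
      · exact (pow_pred_eq_one_iff hl Fintype.card_pos).mpr h'
      · have hdvd' : Fintype.card E + 1 ∣ q + 1 := by
          simpa [hq] using Odd.nat_add_dvd_pow_add_pow (Fintype.card E) 1 hr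
        have hq1 : 1 ≤ q := by rw [hq]; exact Nat.one_le_pow _ _ Fintype.card_pos
        have h3 := (pow_succ_eq_one_iff hl).mp
          (pow_eq_one_of_dvd ((pow_succ_eq_one_iff hl).mpr h') hdvd')
        rw [(pow_pred_eq_one_iff hl hq1).mp h] at h3
        exact absurd ((inv_eq_self_iff hl).mp h3.symm) hl2
    · exact fun h => pow_eq_one_of_dvd h hdvd
  simp only [key]

/-- For even `r` every eigenvalue of an element of `SL₂(E)` has order dividing `q - 1`, so the only
noncentral elements without two fixed points at infinity are those of order dividing `2 * p`. -/
lemma sum_inf_even (hE : Fintype.card E = p ^ k) (hq : q = Fintype.card E ^ r)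
    (hF : Fintype.card F = q ^ 2) (h2 : (2 : F) ≠ 0) (i : E →+* F) (hr : Even r) :
    ∑ m : SpecialLinearGroup (Fin 2) E, (if m ^ 2 = 1 then q + 1 else
      if m ^ (2 * p) = 1 then 1 else if m ^ (q - 1) = 1 then 2 else 0) +
      2 * Fintype.card E ^ 2 + 2 * Fintype.card E = 2 * q + 2 * Fintype.card E ^ 3 := by
  have h2E : (2 : E) ≠ 0 := fun h => h2 (by rw [← map_ofNat i 2, h, map_zero])
  have h : ∑ m : SpecialLinearGroup (Fin 2) E,
      (if m ^ (2 * p) = 1 then 1 else if m ^ (q - 1) = 1 then 2 else 0) +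
      #{m : SpecialLinearGroup (Fin 2) E | m ^ (2 * p) = 1} =
      2 * Fintype.card (SpecialLinearGroup (Fin 2) E) := by
    rw [card_filter, ← sum_add_distrib, ← card_univ, mul_comm 2 (#univ),
      ← smul_eq_mul (#univ), ← sum_const]
    refine sum_congr rfl fun m _ => ?_
    by_cases hm : m ^ (2 * p) = 1
    · simp [hm]
    obtain ⟨l, hl, hl2, hlP, hn⟩ := exists_eigenvalue p hE hq hF h2 i m hm
    have key : m ^ (q - 1) = 1 := by
      rw [hn]
      obtain ⟨s, rfl⟩ := hr.two_dvd
      have hdvd : Fintype.card E ^ 2 - 1 ∣ q - 1 := by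
        rw [hq, pow_mul]
        simpa using Nat.sub_dvd_pow_sub_pow (Fintype.card E ^ 2) 1 s
      have hfac : Fintype.card E ^ 2 - 1 = (Fintype.card E + 1) * (Fintype.card E - 1) := by
        rw [← Nat.sq_sub_sq, one_pow]
      refine pow_eq_one_of_dvd ?_ hdvd
      rcases hlP with h' | h'
      · exact pow_eq_one_of_dvd ((pow_pred_eq_one_iff hl Fintype.card_pos).mpr h')
          (hfac ▸ dvd_mul_left _ _)
      · exact pow_eq_one_of_dvd ((pow_succ_eq_one_iff hl).mpr h') (hfac ▸ dvd_mul_right _ _)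
    simp [hm, key]
  rw [card_pow_two_mul_char p hE hq hF h2 i, card_SL2] at h
  rw [sum_inf_eq p q h2E]
  have h1 := Fintype.card_pos (α := E)
  zify [h1] at h ⊢
  linear_combination h

/-- The elements `m ≠ 1` of `SL₂(E)` with `m ^ w = 1`, each counted twice: their eigenvalues are
the nontrivial common roots of unity of orders dividing `w` and `|E| + 1`. -/
lemma sum_eps (hE : Fintype.card E = p ^ k) (hq : q = Fintype.card E ^ r)
    (hF : Fintype.card F = q ^ 2) (h2 : (2 : F) ≠ 0) (i : E →+* F) {w : ℕ} (hw : Odd w)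
    (hwp : Nat.Coprime w p) (hwq : w ∣ q + 1) :
    ∑ m : SpecialLinearGroup (Fin 2) E, (if m ≠ 1 ∧ m ^ w = 1 then 2 else 0) =
      Fintype.card E * (Fintype.card E - 1) * (Nat.gcd (Fintype.card E + 1) w - 1) := by
  set P := Fintype.card E with hP
  have hP1 : 1 ≤ P := Fintype.card_pos
  have hq1 : 1 ≤ q := by rw [hq]; exact Nat.one_le_pow _ _ hP1
  have htr : ∀ m : SpecialLinearGroup (Fin 2) E,
      (SpecialLinearGroup.map i m) 0 0 + (SpecialLinearGroup.map i m) 1 1 =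
      i (m 0 0 + m 1 1) := by
    intro m
    rw [map_add]
    rfl
  have hstep1 : ∀ m : SpecialLinearGroup (Fin 2) E, (if m ≠ 1 ∧ m ^ w = 1 then 2 else 0) =
      #{e : F | e ^ w = 1 ∧ e ≠ 1 ∧ i (m 0 0 + m 1 1) = e + e⁻¹} := by
    intro m
    obtain ⟨l, hl, hT, hlP⟩ := exists_root_map p hE hq hF h2 i (m 0 0 + m 1 1)
    have := card_eps p hw hwp (SpecialLinearGroup.map i m) hl ((htr m).trans hT)
    rw [htr] at this
    rw [this]
    have h1 := map_pow_eq_one_iff i m 1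
    rw [pow_one, pow_one] at h1
    simp only [ne_eq, h1, map_pow_eq_one_iff]
  have hdvd : P - 1 ∣ q - 1 := by
    simpa [hq] using Nat.sub_dvd_pow_sub_pow P 1 r
  have hnot : ∀ e : F, e ≠ 0 → e ^ w = 1 → e ≠ 1 → e ^ P ≠ e := by
    intro e he hew he1 heP
    have h3 := (pow_pred_eq_one_iff he hq1).mp
      (pow_eq_one_of_dvd ((pow_pred_eq_one_iff he hP1).mpr heP) hdvd)
    have h4 := (pow_succ_eq_one_iff he).mp (pow_eq_one_of_dvd hew hwq)
    rw [h3] at h4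
    exact he1 (eq_one_of_sq_of_odd hw ((inv_eq_self_iff he).mp h4.symm) hew)
  have hw0 : w ≠ 0 := by rintro rfl; simp at hw
  have hstep2 : ∀ e : F, e ^ w = 1 → e ≠ 1 →
      #{m : SpecialLinearGroup (Fin 2) E | i (m 0 0 + m 1 1) = e + e⁻¹} =
        if e ^ (P + 1) = 1 then P * (P - 1) else 0 := by
    intro e hew he1
    have he : e ≠ 0 := by rintro rfl; simp [hw0] at hew
    split_ifs with heP
    · have heP' := (pow_succ_eq_one_iff he).mp heP
      obtain ⟨T, hT⟩ : ∃ T : E, i T = e + e⁻¹ := by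
        rw [← pow_card_eq_self_iff i]
        have := map_add (iterateFrobenius F p k) e e⁻¹
        simp only [iterateFrobenius_def, ← hE] at this
        rw [this, inv_pow, heP', _root_.inv_inv, add_comm]
      have h0 : nRoots T = 0 := by
        rw [nRoots_transfer i, card_eq_zero, filter_eq_empty_iff]
        rintro x - ⟨hxP, hx⟩
        rcases (quad_iff he hT).mp hx with rfl | rfl
        · exact hnot _ he hew he1 hxP
        · rw [inv_pow, _root_.inv_inj] at hxP
          exact hnot _ he hew he1 hxP
      have := card_trace T
      rw [h0, mul_zero, add_zero] at this
      rw [← this]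
      congr 1
      ext m
      simp only [mem_filter, mem_univ, true_and]
      rw [← hT, i.injective.eq_iff]
    · rw [card_eq_zero, filter_eq_empty_iff]
      intro m _ hm
      obtain ⟨l, hl, hT, hlP⟩ := exists_root_map p hE hq hF h2 i (m 0 0 + m 1 1)
      have : e ^ P = e ∨ e ^ P = e⁻¹ := by
        rcases (sum_inv_iff hl hT he).mp hm with rfl | rfl
        · exact hlP
        · rw [inv_pow]
          rcases hlP with h' | h' <;> simp [hP, h']
      rcases this with h' | h'
      · exact hnot _ he hew he1 h'
      · exact heP ((pow_succ_eq_one_iff he).mpr h')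
  have hcard : #{e : F | e ^ w = 1 ∧ e ≠ 1 ∧ e ^ (P + 1) = 1} = Nat.gcd (P + 1) w - 1 := by
    have hg : Nat.gcd (P + 1) w ∣ Fintype.card F - 1 := by
      have hfac : q ^ 2 - 1 = (q + 1) * (q - 1) := by rw [← Nat.sq_sub_sq, one_pow]
      rw [hF, hfac]
      exact ((Nat.gcd_dvd_right _ _).trans hwq).mul_right _
    have h1 : ({e : F | e ^ w = 1 ∧ e ≠ 1 ∧ e ^ (P + 1) = 1} : Finset F) =
        ({e : F | e ^ Nat.gcd (P + 1) w = 1} : Finset F).erase 1 := by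
      ext e
      simp only [mem_filter, mem_univ, true_and, mem_erase]
      constructor
      · rintro ⟨h1, h2, h3⟩
        exact ⟨h2, pow_gcd_eq_one.mpr ⟨h3, h1⟩⟩
      · rintro ⟨h1, h3⟩
        exact ⟨pow_eq_one_of_dvd h3 (Nat.gcd_dvd_right _ _), h1,
          pow_eq_one_of_dvd h3 (Nat.gcd_dvd_left _ _)⟩
    rw [h1, card_erase_of_mem (by simp), card_pow_eq_one_field hg]
  rw [sum_congr rfl fun m _ => hstep1 m]
  simp only [card_filter]
  rw [sum_comm, ← hcard, card_filter, mul_sum]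
  refine sum_congr rfl fun e _ => ?_
  by_cases hew : e ^ w = 1
  · by_cases he1 : e = 1
    · simp [he1]
    · have := hstep2 e hew he1
      rw [card_filter] at this
      simp only [hew, he1, ne_eq, not_false_eq_true, true_and, this]
      split_ifs <;> simp
  · simp [hew]

lemma gcd_eq_one_of_even {P : ℕ} (hP : 1 ≤ P) (hq : q = P ^ r) (hr : Even r) {w : ℕ} (hw : Odd w)
    (hwq : w ∣ q + 1) : Nat.gcd (P + 1) w = 1 := by
  have hg : Odd (Nat.gcd (P + 1) w) := hw.of_dvd_nat (Nat.gcd_dvd_right _ _)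
  have h1 : Nat.gcd (P + 1) w ∣ q + 1 := (Nat.gcd_dvd_right _ _).trans hwq
  obtain ⟨s, rfl⟩ := hr.two_dvd
  have h2 : Nat.gcd (P + 1) w ∣ q - 1 := by
    refine (Nat.gcd_dvd_left _ _).trans (Dvd.dvd.trans ?_
      (by simpa [hq, pow_mul] using Nat.sub_dvd_pow_sub_pow (P ^ 2) 1 s))
    have hfac : P ^ 2 - 1 = (P + 1) * (P - 1) := by rw [← Nat.sq_sub_sq, one_pow]
    exact hfac ▸ dvd_mul_right _ _
  have hq1 : 1 ≤ q := by rw [hq]; exact Nat.one_le_pow _ _ hP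
  have h3 : Nat.gcd (P + 1) w ∣ 2 := by
    have := Nat.dvd_sub h1 h2
    rwa [show q + 1 - (q - 1) = 2 by omega] at this
  rcases (Nat.dvd_prime Nat.prime_two).mp h3 with h | h
  · exact h
  · rw [h] at hg
    exact absurd hg (by decide)

end transfer

/-! ### Fixed affine points, summed over the scalars -/

section affine
variable {F : Type*} [Field F] [Fintype F]

/-- The number of affine points of the Hermitian curve fixed by `e • m`. -/
lemma card_aff {q : ℕ} (hq : 1 ≤ q) (hF : Fintype.card F = q ^ 2)
    (σ : F →+* F) (hσ : ∀ x, σ x = x ^ q) (hσσ : ∀ x, σ (σ x) = x)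
    (m : SpecialLinearGroup (Fin 2) F) (h01 : m 0 1 = σ (m 1 0)) (h11 : m 1 1 = σ (m 0 0))
    {w : ℕ} (hw : Odd w) (hwq : w ∣ q + 1) {e : F} (he : e ^ w = 1) :
    #{z : F × F | z.1 ^ (q + 1) - z.2 ^ (q + 1) = 1 ∧
      e * m 0 0 * z.1 + e * m 0 1 * z.2 = z.1 ∧ e * m 1 0 * z.1 + e * m 1 1 * z.2 = z.2} =
    (if e = 1 then (if m = 1 then q ^ 3 - q else 0) else 0) +
      (q + 1) * if e ^ w = 1 ∧ e ≠ 1 ∧ m 0 0 + m 1 1 = e + e⁻¹ then 1 else 0 := by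
  have hw0 : w ≠ 0 := by rintro rfl; simp at hw
  have he0 : e ≠ 0 := by rintro rfl; simp [hw0] at he
  have heq : e ^ q = e⁻¹ := (pow_succ_eq_one_iff he0).mp (pow_eq_one_of_dvd he hwq)
  have hN : ∀ x : F, x ^ (q + 1) = x * σ x := fun x => by rw [hσ, pow_succ, mul_comm]
  by_cases he1 : e = 1
  · subst he1
    simp only [ne_eq, not_true_eq_false, false_and, and_false, if_false, mul_zero, add_zero,
      if_true, one_mul]
    split_ifs with hm
    · subst hm
      rw [← card_affine hq hF σ hσ hσσ]
      congr 1
      ext z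
      simp
    · rw [card_eq_zero, filter_eq_empty_iff]
      rintro ⟨x, y⟩ - ⟨h1, h2, h3⟩
      exact hm (eq_one_of_fixed σ hσσ m h01 h11 (by rw [← hN, ← hN]; exact h1) h2 h3)
  · have key : ∀ z : F × F, (e * m 0 0 * z.1 + e * m 0 1 * z.2 = z.1 ∧
        e * m 1 0 * z.1 + e * m 1 1 * z.2 = z.2) ↔ (m 0 0 * z.1 + m 0 1 * z.2 = e⁻¹ * z.1 ∧
        m 1 0 * z.1 + m 1 1 * z.2 = e⁻¹ * z.2) := by
      intro z
      have : ∀ a b : F, e * a = b ↔ a = e⁻¹ * b := fun a b => by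
        rw [eq_inv_mul_iff_mul_eq₀ he0]
      rw [← this, ← this]
      simp only [mul_add, mul_assoc]
    simp only [key, he, he1, ne_eq, not_false_eq_true, true_and, if_false, zero_add]
    have hne : e⁻¹ ≠ e := fun hc =>
      he1 (eq_one_of_sq_of_odd hw ((inv_eq_self_iff he0).mp hc) he)
    split_ifs with hT
    · rw [mul_one]
      exact card_eigen hF σ hσ hσσ m h01 h11 (inv_mul_cancel₀ he0)
        (by rw [map_inv₀, hσ, heq, _root_.inv_inv]) hne (by rw [hT, add_comm])
    · rw [mul_zero, card_eq_zero, filter_eq_empty_iff]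
      rintro ⟨x, y⟩ - ⟨h1, h2, h3⟩
      -- `m` maps `(x, y)` to `e⁻¹ • (x, y)` and, by unitarity, `(σ y, σ x)` to `e • (σ y, σ x)`.
      rw [hN, hN] at h1
      simp only at h2 h3
      have hσe : σ e⁻¹ = e := by rw [map_inv₀, hσ, heq, _root_.inv_inv]
      have h4 := congrArg σ h2
      have h5 := congrArg σ h3
      simp only [map_add, map_mul, hσe, h01, h11, hσσ] at h4 h5
      rw [h01] at h2
      rw [h11] at h3
      apply hT
      rw [h11]
      linear_combination σ x * h2 - y * h5 + x * h4 - σ y * h3 -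
        (m 0 0 + σ (m 0 0) - e - e⁻¹) * h1

lemma sum_aff (p : ℕ) [Fact p.Prime] [CharP F p] {q : ℕ} (hq : 1 ≤ q)
    (hF : Fintype.card F = q ^ 2) (h2 : (2 : F) ≠ 0)
    (σ : F →+* F) (hσ : ∀ x, σ x = x ^ q) (hσσ : ∀ x, σ (σ x) = x)
    (m : SpecialLinearGroup (Fin 2) F) (h01 : m 0 1 = σ (m 1 0)) (h11 : m 1 1 = σ (m 0 0))
    {w : ℕ} (hw : Odd w) (hwp : Nat.Coprime w p) (hwq : w ∣ q + 1) :
    ∑ e ∈ {e : F | e ^ w = 1}, #{z : F × F | z.1 ^ (q + 1) - z.2 ^ (q + 1) = 1 ∧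
      e * m 0 0 * z.1 + e * m 0 1 * z.2 = z.1 ∧ e * m 1 0 * z.1 + e * m 1 1 * z.2 = z.2} =
    (if m = 1 then q ^ 3 - q else 0) + (q + 1) * if m ≠ 1 ∧ m ^ w = 1 then 2 else 0 := by
  have hT : σ (m 0 0 + m 1 1) = m 0 0 + m 1 1 := by rw [h11, map_add, hσσ, add_comm]
  obtain ⟨l, hl, hl'⟩ := exists_root hF σ hσ h2 hT
  rw [sum_congr rfl fun e he =>
    card_aff hq hF σ hσ hσσ m h01 h11 hw hwq (mem_filter.mp he).2, sum_add_distrib, ← mul_sum,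
    ← card_eps p hw hwp m hl hl', ← card_filter, filter_filter]
  congr 1
  · rw [sum_ite_eq' _ (1 : F), if_pos (by simp)]
  · congr 2
    ext e
    simp only [mem_filter, mem_univ, true_and]
    tauto
end affine

/-! ### Orbits and fixed points in the projective plane -/

section projective
variable {F : Type*} [Field F]

lemma mulVec_ne_zero (M : GL (Fin 3) F) {v : Fin 3 → F} (hv : v ≠ 0) : M.1 *ᵥ v ≠ 0 := by
  intro h
  apply hv
  have := congrArg (fun u => M⁻¹.1 *ᵥ u) h
  simpa [mulVec_mulVec, ← Units.val_mul] using this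

lemma glAct_mk (M : GL (Fin 3) F) (v : Fin 3 → F) (hv : v ≠ 0) :
    glAct M (Projectivization.mk F v hv) =
      Projectivization.mk F (M.1 *ᵥ v) (mulVec_ne_zero M hv) := by
  rw [glAct, Projectivization.map_mk]
  rfl

lemma glAct_mul (M N : GL (Fin 3) F) (x : Projectivization F (Fin 3 → F)) :
    glAct (M * N) x = glAct M (glAct N x) := by
  induction x using Projectivization.ind with
  | h v hv =>
    rw [glAct_mk, glAct_mk, glAct_mk]
    congr 1
    rw [mulVec_mulVec]
    rfl

lemma glAct_one (x : Projectivization F (Fin 3 → F)) : glAct 1 x = x := by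
  induction x using Projectivization.ind with
  | h v hv =>
    rw [glAct_mk]
    congr 1
    exact one_mulVec v

/-- The orbit-counting lemma for a linear group presented as the image of a finite group. -/
lemma numOrbits_mul_card [Finite F] {G : Type*} [Group G] [Fintype G] (ψ : G →* GL (Fin 3) F)
    (O : Set (Projectivization F (Fin 3 → F))) (hO : ∀ g, ∀ x ∈ O, glAct (ψ g) x ∈ O) :
    numOrbits ψ.range O * Fintype.card G =
      ∑ g : G, Nat.card {x // x ∈ O ∧ glAct (ψ g) x = x} := by
  let act : MulAction G O :=
    { smul := fun g x => ⟨glAct (ψ g) x, hO g x x.2⟩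
      one_smul := fun x => Subtype.ext (by
        change glAct (ψ 1) x = x
        rw [map_one, glAct_one])
      mul_smul := fun g g' x => Subtype.ext (by
        change glAct (ψ (g * g')) x = glAct (ψ g) (glAct (ψ g') x)
        rw [map_mul, glAct_mul]) }
  have hsmul : ∀ (g : G) (x : O), ((g • x : O) : Projectivization F (Fin 3 → F)) =
      glAct (ψ g) x := fun _ _ => rfl
  have : Fintype O := Fintype.ofFinite _
  have hb := MulAction.sum_card_fixedBy_eq_card_orbits_mul_card_group G O
  have hfix : ∀ g : G, Fintype.card (MulAction.fixedBy O g) =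
      Nat.card {x // x ∈ O ∧ glAct (ψ g) x = x} := by
    intro g
    rw [← Nat.card_eq_fintype_card]
    refine Nat.card_congr ⟨fun x => ⟨x.1, x.1.2, congrArg Subtype.val x.2⟩,
      fun x => ⟨⟨x.1, x.2.1⟩, Subtype.ext x.2.2⟩, fun _ => rfl, fun _ => rfl⟩
  rw [← sum_congr rfl fun g _ => hfix g, hb]
  congr 1
  rw [numOrbits, ← Nat.card_eq_fintype_card]
  symm
  let T : O → Set (Projectivization F (Fin 3 → F)) := fun x => {y | ∃ g ∈ ψ.range, glAct g x = y}
  have hT : ∀ x y : O, T x = T y ↔ (MulAction.orbitRel G O) x y := by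
    intro x y
    rw [MulAction.orbitRel_apply, MulAction.mem_orbit_iff]
    constructor
    · intro h
      have hx : (x : Projectivization F (Fin 3 → F)) ∈ T x := ⟨1, one_mem _, glAct_one _⟩
      rw [h] at hx
      obtain ⟨-, ⟨g, rfl⟩, hg⟩ := hx
      exact ⟨g, Subtype.ext hg⟩
    · rintro ⟨g, rfl⟩
      ext z
      constructor
      · rintro ⟨-, ⟨g', rfl⟩, hg'⟩
        refine ⟨ψ g' * ψ g, ⟨g' * g, map_mul _ _ _⟩, ?_⟩
        rw [glAct_mul, ← hsmul]
        exact hg'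
      · rintro ⟨-, ⟨g', rfl⟩, hg'⟩
        refine ⟨ψ g' * (ψ g)⁻¹, ⟨g' * g⁻¹, by simp⟩, ?_⟩
        rw [hsmul, ← glAct_mul, inv_mul_cancel_right]
        exact hg'
  refine Nat.card_congr (Equiv.ofBijective
    (Quotient.lift (fun x : O => (⟨T x, x, x.2, rfl⟩ :
      ((fun x => {y | ∃ g ∈ ψ.range, glAct g x = y}) '' O :
        Set (Set (Projectivization F (Fin 3 → F))))))
      (fun x y h => Subtype.ext ((hT x y).mpr h))) ⟨?_, ?_⟩)
  · intro a b
    induction a using Quotient.ind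
    induction b using Quotient.ind
    intro h
    exact Quotient.sound ((hT _ _).mp (congrArg Subtype.val h))
  · rintro ⟨-, x, hx, rfl⟩
    exact ⟨Quotient.mk _ ⟨x, hx⟩, rfl⟩

lemma mk_mem_hermitianPts (q : ℕ) (v : Fin 3 → F) (hv : v ≠ 0) :
    Projectivization.mk F v hv ∈ hermitianPts q F ↔
      v 1 ^ (q + 1) = v 0 ^ (q + 1) - v 2 ^ (q + 1) := by
  obtain ⟨a, ha⟩ := Projectivization.exists_smul_eq_mk_rep F v hv
  rw [hermitianPts, Set.mem_ofPred_eq, ← ha]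
  have h : ∀ i, (a • v) i = (a : F) * v i := fun i => rfl
  simp only [h, mul_pow, ← mul_sub]
  exact mul_right_inj' (pow_ne_zero _ a.ne_zero)

lemma affine_ne_zero (x y : F) : (![x, y, 1] : Fin 3 → F) ≠ 0 := fun h => by
  simpa using congrFun h 2

lemma infinite_ne_zero (t : F) : (![1, t, 0] : Fin 3 → F) ≠ 0 := fun h => by
  simpa using congrFun h 0

lemma block_mulVec {a b c d : F} (v : Fin 3 → F) :
    !![a, b, 0; c, d, 0; 0, 0, 1] *ᵥ v = ![a * v 0 + b * v 1, c * v 0 + d * v 1, v 2] := by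
  ext i
  fin_cases i <;> simp [mulVec, dotProduct, Fin.sum_univ_three]

/-- Fixed points of a block matrix on the Hermitian curve: affine ones, in coordinates
`(x : y : 1)`, and those on the line at infinity, in coordinates `(1 : t : 0)`. -/
lemma card_fixed [Fintype F] (q : ℕ) (M : GL (Fin 3) F) {a b c d : F}
    (hM : (M : Matrix (Fin 3) (Fin 3) F) = !![a, b, 0; c, d, 0; 0, 0, 1]) :
    Nat.card {x // x ∈ hermitianPts q F ∧ glAct M x = x} =
      #{z : F × F | z.1 ^ (q + 1) - z.2 ^ (q + 1) = 1 ∧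
        a * z.1 + b * z.2 = z.1 ∧ c * z.1 + d * z.2 = z.2} +
      #{t : F | t ^ (q + 1) = 1 ∧ c + d * t = t * (a + b * t)} := by
  have hmul : ∀ v : Fin 3 → F, M.1 *ᵥ v = ![a * v 0 + b * v 1, c * v 0 + d * v 1, v 2] := by
    intro v
    rw [hM, block_mulVec]
  have hA : ∀ z : F × F, (Projectivization.mk F _ (affine_ne_zero z.1 z.2) ∈ hermitianPts q F ∧
      glAct M (Projectivization.mk F _ (affine_ne_zero z.1 z.2)) =
        Projectivization.mk F _ (affine_ne_zero z.1 z.2)) ↔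
      (z.1 ^ (q + 1) - z.2 ^ (q + 1) = 1 ∧
        a * z.1 + b * z.2 = z.1 ∧ c * z.1 + d * z.2 = z.2) := by
    rintro ⟨x, y⟩
    rw [mk_mem_hermitianPts, glAct_mk, Projectivization.mk_eq_mk_iff']
    refine and_congr ?_ ?_
    · change y ^ (q + 1) = x ^ (q + 1) - 1 ^ (q + 1) ↔ x ^ (q + 1) - y ^ (q + 1) = 1
      rw [one_pow]
      constructor <;> intro h <;> linear_combination -h
    · rw [hmul]
      constructor
      · rintro ⟨u, hu⟩
        have h0 := congrFun hu 0
        have h1 := congrFun hu 1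
        have h2 := congrFun hu 2
        simp at h0 h1 h2
        subst h2
        exact ⟨by simpa using h0.symm, by simpa using h1.symm⟩
      · rintro ⟨h0, h1⟩
        refine ⟨1, ?_⟩
        change (1 : F) • ![x, y, 1] = ![a * x + b * y, c * x + d * y, 1]
        rw [one_smul, h0, h1]
  have hI : ∀ t : F, (Projectivization.mk F _ (infinite_ne_zero t) ∈ hermitianPts q F ∧
      glAct M (Projectivization.mk F _ (infinite_ne_zero t)) =
        Projectivization.mk F _ (infinite_ne_zero t)) ↔
      (t ^ (q + 1) = 1 ∧ c + d * t = t * (a + b * t)) := by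
    intro t
    rw [mk_mem_hermitianPts, glAct_mk, Projectivization.mk_eq_mk_iff']
    refine and_congr ?_ ?_
    · simp
    · rw [hmul]
      constructor
      · rintro ⟨u, hu⟩
        have h0 := congrFun hu 0
        have h1 := congrFun hu 1
        simp at h0 h1
        rw [← h0, ← h1, mul_comm]
      · intro h
        refine ⟨a + b * t, ?_⟩
        ext i
        fin_cases i <;> simp [h, mul_comm]
  rw [← Fintype.card_subtype, ← Fintype.card_subtype, ← Nat.card_eq_fintype_card,
    ← Nat.card_eq_fintype_card, ← Nat.card_sum]
  symm
  refine Nat.card_congr (Equiv.ofBijective (Sum.elim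
    (fun z => ⟨_, (hA z.1).mpr z.2⟩) (fun t => ⟨_, (hI t.1).mpr t.2⟩)) ⟨?_, ?_⟩)
  · rintro (⟨⟨x, y⟩, h⟩ | ⟨t, h⟩) (⟨⟨x', y'⟩, h'⟩ | ⟨t', h'⟩) he
    all_goals
      replace he := congrArg Subtype.val he
      simp only [Sum.elim_inl, Sum.elim_inr] at he
      rw [Projectivization.mk_eq_mk_iff'] at he
      obtain ⟨u, hu⟩ := he
      have h0 := congrFun hu 0
      have h1 := congrFun hu 1
      have h2 := congrFun hu 2
      simp at h0 h1 h2
    · subst h2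
      simp at h0 h1
      subst h0 h1
      rfl
    · subst h2
      simp at h0
    · subst h0
      simp at h1
      subst h1
      rfl
  · rintro ⟨x, hx⟩
    induction x using Projectivization.ind with
    | h v hv =>
      by_cases h2 : v 2 = 0
      · have hv0 : v 0 ≠ 0 := by
          intro h0
          have h := (mk_mem_hermitianPts q v hv).mp hx.1
          rw [h2, h0, sub_self, pow_eq_zero_iff (Nat.succ_ne_zero q)] at h
          apply hv
          ext i
          fin_cases i <;> simp [h0, h, h2]
        have e : Projectivization.mk F v hv =
            Projectivization.mk F _ (infinite_ne_zero (v 1 / v 0)) := by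
          rw [Projectivization.mk_eq_mk_iff']
          refine ⟨v 0, ?_⟩
          ext i
          fin_cases i <;> simp [h2, mul_div_cancel₀ _ hv0]
        refine ⟨Sum.inr ⟨v 1 / v 0, (hI _).mp (e ▸ hx)⟩, Subtype.ext e.symm⟩
      · have e : Projectivization.mk F v hv =
            Projectivization.mk F _ (affine_ne_zero (v 0 / v 2) (v 1 / v 2)) := by
          rw [Projectivization.mk_eq_mk_iff']
          refine ⟨v 2, ?_⟩
          ext i
          fin_cases i <;> simp [mul_div_cancel₀ _ h2]
        refine ⟨Sum.inl ⟨(v 0 / v 2, v 1 / v 2), (hA _).mp (e ▸ hx)⟩, Subtype.ext e.symm⟩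

end projective

/-! ### The group `L` as an image of `SL₂(E)` times a group of roots of unity -/

section group
variable {F : Type*} [Field F]

lemma transvection_pow {E : Type*} [Field E] {i j : Fin 2} (hij : i ≠ j) (c : E) (n : ℕ) :
    SpecialLinearGroup.transvection hij c ^ n = SpecialLinearGroup.transvection hij (n * c) := by
  induction n with
  | zero => simp
  | succ n ih =>
    rw [pow_succ, ih, ← SpecialLinearGroup.transvection_add]
    congr 1
    push_cast
    ring

/-- In characteristic `p` there is no nontrivial multiplicative character of `SL₂(E)` with values
in a field of the same characteristic, `SL₂(E)` being generated by elements of order `p`. -/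
lemma character_eq_one {E : Type*} [Field E] (p : ℕ) [hp : Fact p.Prime] [CharP E p] [CharP F p]
    (δ : SpecialLinearGroup (Fin 2) E →* F) (m : SpecialLinearGroup (Fin 2) E) : δ m = 1 := by
  induction m using SL2.transvection_induction with
  | htransvec i j hij c =>
    have h : δ (SpecialLinearGroup.transvection hij c) ^ p = 1 := by
      rw [← map_pow, transvection_pow]
      simp
    have h' : (δ (SpecialLinearGroup.transvection hij c) - 1) ^ p = 0 := by
      rw [sub_pow_char, h, one_pow, sub_self]
    exact sub_eq_zero.mp (pow_eq_zero_iff hp.out.ne_zero |>.mp h')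
  | hmul A B hA hB => rw [map_mul, hA, hB, one_mul]

/-- A representation of `SL₂(E)` inside `M_ℓ` is given by its upper left block, which has
determinant one. -/
lemma exists_block {E : Type*} [Field E] (p : ℕ) [Fact p.Prime] [CharP E p] [CharP F p] {q : ℕ}
    (f : SpecialLinearGroup (Fin 2) E →* GL (Fin 3) F) (hinj : Function.Injective f)
    (hf : ∀ m, f m ∈ MlSet q F) :
    ∃ ρ : SpecialLinearGroup (Fin 2) E →* SpecialLinearGroup (Fin 2) F,
      Function.Injective ρ ∧ (∀ m, ρ m 0 1 = (ρ m 1 0) ^ q) ∧ (∀ m, ρ m 1 1 = (ρ m 0 0) ^ q) ∧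
      ∀ m, (f m : Matrix (Fin 3) (Fin 3) F) =
        !![ρ m 0 0, ρ m 0 1, 0; ρ m 1 0, ρ m 1 1, 0; 0, 0, 1] := by
  let B : Matrix (Fin 3) (Fin 3) F → Matrix (Fin 2) (Fin 2) F := fun N =>
    !![N 0 0, N 0 1; N 1 0, N 1 1]
  have hshape : ∀ m, (f m : Matrix (Fin 3) (Fin 3) F) =
      !![(f m).1 0 0, (f m).1 0 1, 0; (f m).1 1 0, (f m).1 1 1, 0; 0, 0, 1] := by
    intro m
    obtain ⟨a, c, τ, -, -, h⟩ := hf m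
    rw [h]
    rfl
  let ρ₀ : SpecialLinearGroup (Fin 2) E →* Matrix (Fin 2) (Fin 2) F :=
    { toFun := fun m => B (f m).1
      map_one' := by
        rw [map_one]
        ext i j
        fin_cases i <;> fin_cases j <;> simp [B]
      map_mul' := fun m n => by
        have h0 : (f m).1 0 2 = 0 := by rw [hshape m]; rfl
        have h1 : (f m).1 1 2 = 0 := by rw [hshape m]; rfl
        rw [map_mul, Units.val_mul]
        ext i j
        fin_cases i <;> fin_cases j <;>
          simp [B, Matrix.mul_apply, Fin.sum_univ_three, Fin.sum_univ_two, h0, h1] }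
  have hdet : ∀ m, (ρ₀ m).det = 1 := fun m =>
    character_eq_one p (Matrix.detMonoidHom.comp ρ₀) m
  have hrel : ∀ m, ρ₀ m 0 1 = (ρ₀ m 1 0) ^ q ∧ ρ₀ m 1 1 = (ρ₀ m 0 0) ^ q := by
    intro m
    obtain ⟨a, c, τ, hac, -, h⟩ := hf m
    have hB : ρ₀ m = !![a, τ * c ^ q; c, τ * a ^ q] := by
      change B (f m).1 = _
      rw [h]
      rfl
    have hd := hdet m
    rw [hB, det_fin_two_of] at hd
    have hτ : τ = 1 := by linear_combination hd - τ * hac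
    rw [hB, hτ]
    simp
  let ρ : SpecialLinearGroup (Fin 2) E →* SpecialLinearGroup (Fin 2) F :=
    { toFun := fun m => ⟨ρ₀ m, hdet m⟩
      map_one' := Subtype.ext (map_one ρ₀)
      map_mul' := fun m n => Subtype.ext (map_mul ρ₀ m n) }
  have hval : ∀ m, (f m : Matrix (Fin 3) (Fin 3) F) =
      !![ρ m 0 0, ρ m 0 1, 0; ρ m 1 0, ρ m 1 1, 0; 0, 0, 1] := hshape
  refine ⟨ρ, ?_, fun m => (hrel m).1, fun m => (hrel m).2, hval⟩
  intro m n h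
  refine hinj (Units.ext ?_)
  rw [hval, hval, h]

/-- The homology `diag(ε, ε, 1)`, as a function of `ε`. -/
def scal (F : Type*) [Field F] : Fˣ →* GL (Fin 3) F :=
  MonoidHom.toHomUnits
    { toFun := fun ε => Matrix.diagonal ![(ε : F), ε, 1]
      map_one' := by
        ext i j
        fin_cases i <;> fin_cases j <;> simp
      map_mul' := fun a b => by
        rw [diagonal_mul_diagonal]
        congr 1
        ext i
        fin_cases i <;> simp }

lemma scal_val (ε : Fˣ) : (scal F ε : Matrix (Fin 3) (Fin 3) F) =
    Matrix.diagonal ![(ε : F), ε, 1] := rfl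

lemma scal_injective : Function.Injective (scal F) := by
  intro a b h
  have := congrArg (fun M : GL (Fin 3) F => M.1 0 0) h
  simp only [scal_val] at this
  exact Units.ext (by simpa using this)

lemma mul_scal_val (M : GL (Fin 3) F) {a b c d : F} (ε : Fˣ)
    (hM : (M : Matrix (Fin 3) (Fin 3) F) = !![a, b, 0; c, d, 0; 0, 0, 1]) :
    ((M * scal F ε : GL (Fin 3) F) : Matrix (Fin 3) (Fin 3) F) =
      !![ε * a, ε * b, 0; ε * c, ε * d, 0; 0, 0, 1] := by
  rw [Units.val_mul, scal_val, hM]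
  ext i j
  rw [mul_diagonal]
  fin_cases i <;> fin_cases j <;> simp [mul_comm]

lemma scal_commute (M : GL (Fin 3) F) {a b c d : F} (ε : Fˣ)
    (hM : (M : Matrix (Fin 3) (Fin 3) F) = !![a, b, 0; c, d, 0; 0, 0, 1]) :
    Commute M (scal F ε) := by
  refine Units.ext ?_
  rw [mul_scal_val M ε hM, Units.val_mul, scal_val, hM]
  ext i j
  rw [diagonal_mul]
  fin_cases i <;> fin_cases j <;> simp

/-- The intersection of `L` with `Z₁` consists of the scalars of order dividing `w`. -/
lemma inter_Z1Set [Finite F] {q w : ℕ} (hw0 : w ≠ 0) (L : Subgroup (GL (Fin 3) F))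
    (hcard : Nat.card ((L : Set (GL (Fin 3) F)) ∩ Z1Set q F : Set (GL (Fin 3) F)) = w) :
    (L : Set (GL (Fin 3) F)) ∩ Z1Set q F = (rootsOfUnity w F).map (scal F) ∧
      Nat.card (rootsOfUnity w F) = w := by
  have : NeZero w := ⟨hw0⟩
  set C : Subgroup Fˣ := L.comap (scal F) ⊓ rootsOfUnity ((q + 1) / 2) F
  have himage : (L : Set (GL (Fin 3) F)) ∩ Z1Set q F = (scal F) '' C := by
    ext M
    constructor
    · rintro ⟨hML, ε, hε, hM⟩
      have hε0 : ε ≠ 0 := by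
        rintro rfl
        have := (Matrix.isUnit_iff_isUnit_det _).mp M.isUnit
        rw [hM, det_diagonal] at this
        simp [Fin.prod_univ_three] at this
      have hMs : scal F (Units.mk0 ε hε0) = M := Units.ext (by rw [hM]; rfl)
      refine ⟨Units.mk0 ε hε0, ⟨?_, ?_⟩, hMs⟩
      · change scal F _ ∈ L
        rwa [hMs]
      · exact (mem_rootsOfUnity _ _).mpr (Units.ext hε)
    · rintro ⟨ε, ⟨h1, h2⟩, rfl⟩
      refine ⟨h1, ε, ?_, rfl⟩
      rw [← Units.val_pow_eq_pow_val, (mem_rootsOfUnity _ _).mp h2, Units.val_one]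
  have hCcard : Nat.card C = w := by
    rw [← hcard, himage]
    exact (Nat.card_image_of_injective scal_injective _).symm
  have hle : C ≤ rootsOfUnity w F := by
    intro ε hε
    rw [mem_rootsOfUnity]
    have := pow_card_eq_one' (x := (⟨ε, hε⟩ : C))
    rw [hCcard] at this
    exact congrArg Subtype.val this
  have hCeq : C = rootsOfUnity w F :=
    Subgroup.eq_of_le_of_card_ge hle (by rw [hCcard]; exact card_rootsOfUnity F w)
  rw [← hCeq]
  exact ⟨himage, hCcard⟩

lemma MlSet_preserves {q : ℕ} (σ : F →+* F) (hσ : ∀ x, σ x = x ^ q) (hσσ : ∀ x, σ (σ x) = x)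
    {M : GL (Fin 3) F} (hM : M ∈ MlSet q F) :
    ∀ x ∈ hermitianPts q F, glAct M x ∈ hermitianPts q F := by
  intro x hx
  have hN : ∀ x : F, x ^ (q + 1) = x * σ x := fun x => by rw [hσ, pow_succ, mul_comm]
  obtain ⟨a, c, τ, hac, hτ, hM⟩ := hM
  induction x using Projectivization.ind with
  | h v hv =>
    rw [mk_mem_hermitianPts] at hx
    rw [glAct_mk, mk_mem_hermitianPts, hM, block_mulVec]
    change (c * v 0 + τ * a ^ q * v 1) ^ (q + 1) =
      (a * v 0 + τ * c ^ q * v 1) ^ (q + 1) - v 2 ^ (q + 1)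
    rw [hN, hN, hN] at hx ⊢
    rw [hN, hN] at hac
    rw [hN] at hτ
    simp only [← hσ, map_add, map_mul, hσσ]
    linear_combination hx + (v 1 * σ (v 1) * τ * σ τ - v 0 * σ (v 0)) * hac +
      v 1 * σ (v 1) * hτ
end group

/-! ### The orbit count -/

section count
variable {E F : Type*} [Field E] [Fintype E] [Field F] [Fintype F]

lemma sum_rootsOfUnity {w : ℕ} (hw0 : w ≠ 0) [Fintype (rootsOfUnity w F)] (f : F → ℕ) :
    ∑ ε : rootsOfUnity w F, f ((ε : Fˣ) : F) = ∑ e ∈ {e : F | e ^ w = 1}, f e := by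
  refine Finset.sum_bij (fun ε _ => ((ε : Fˣ) : F)) ?_ ?_ ?_ (fun _ _ => rfl)
  · intro ε _
    rw [mem_filter]
    exact ⟨mem_univ _, congrArg Units.val ((mem_rootsOfUnity _ _).mp ε.2)⟩
  · intro a _ b _ h
    exact Subtype.ext (Units.ext h)
  · intro e he
    have he' := (mem_filter.mp he).2
    have he0 : e ≠ 0 := by rintro rfl; simp [hw0] at he'
    exact ⟨⟨Units.mk0 e he0, (mem_rootsOfUnity _ _).mpr (Units.ext he')⟩, mem_univ _, rfl⟩

/-- Burnside's formula for `L`, the fixed points having been counted in terms of the orders of the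
elements of `SL₂(E)`. -/
lemma numOrbits_mul_eq (p : ℕ) [Fact p.Prime] [CharP E p] [CharP F p] {q : ℕ} (hq : 1 ≤ q)
    (hF : Fintype.card F = q ^ 2) (h2 : (2 : F) ≠ 0)
    (σ : F →+* F) (hσ : ∀ x, σ x = x ^ q) (hσσ : ∀ x, σ (σ x) = x)
    {w : ℕ} (hw : Odd w) (hwp : Nat.Coprime w p) (hwq : w ∣ q + 1)
    (L : Subgroup (GL (Fin 3) F)) (hLMl : (L : Set (GL (Fin 3) F)) ⊆ MlSet q F)
    (hZ1card : Nat.card ((L : Set (GL (Fin 3) F)) ∩ Z1Set q F : Set (GL (Fin 3) F)) = w)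
    (S : Subgroup (GL (Fin 3) F)) (φ : S ≃* SpecialLinearGroup (Fin 2) E)
    (hgen : L = Subgroup.closure
      ((S : Set (GL (Fin 3) F)) ∪ ((L : Set (GL (Fin 3) F)) ∩ Z1Set q F))) :
    numOrbits L (hermitianPts q F) * (Fintype.card (SpecialLinearGroup (Fin 2) E) * w) =
      (q ^ 3 - q) + (q + 1) * (∑ m : SpecialLinearGroup (Fin 2) E,
        if m ≠ 1 ∧ m ^ w = 1 then 2 else 0) +
      w * ∑ m : SpecialLinearGroup (Fin 2) E, (if m ^ 2 = 1 then q + 1 else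
        if m ^ (2 * p) = 1 then 1 else if m ^ (q - 1) = 1 then 2 else 0) := by
  have hw0 : w ≠ 0 := by rintro rfl; simp at hw
  have : NeZero w := ⟨hw0⟩
  obtain ⟨hZ, hroots⟩ := inter_Z1Set hw0 L hZ1card
  let f : SpecialLinearGroup (Fin 2) E →* GL (Fin 3) F := S.subtype.comp φ.symm.toMonoidHom
  have hSL : S ≤ L := by
    rw [hgen]
    exact fun x hx => Subgroup.subset_closure (Or.inl hx)
  have hfinj : Function.Injective f := S.subtype_injective.comp φ.symm.injective
  have hfrange : f.range = S := by
    ext x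
    constructor
    · rintro ⟨m, rfl⟩
      exact (φ.symm m).2
    · intro hx
      exact ⟨φ ⟨x, hx⟩, congrArg Subtype.val (φ.symm_apply_apply ⟨x, hx⟩)⟩
  obtain ⟨ρ, hρ, h01, h11, hval⟩ := exists_block p f hfinj
    (fun m => hLMl (hSL (φ.symm m).2))
  have hρpow : ∀ m n, ρ m ^ n = 1 ↔ m ^ n = 1 := fun m n => by
    rw [← map_pow, map_eq_one_iff _ hρ]
  have hρone : ∀ m, ρ m = 1 ↔ m = 1 := fun m => map_eq_one_iff _ hρ
  let ψ : SpecialLinearGroup (Fin 2) E × rootsOfUnity w F →* GL (Fin 3) F :=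
    f.noncommCoprod ((scal F).comp (rootsOfUnity w F).subtype)
      (fun m ε => scal_commute _ _ (hval m))
  have hψ : ψ.range = L := by
    rw [hgen, Subgroup.closure_union, hZ, Subgroup.closure_eq, Subgroup.closure_eq]
    refine (MonoidHom.noncommCoprod_range f _ _).trans ?_
    rw [hfrange, MonoidHom.range_comp, Subgroup.range_subtype]
  have hB := numOrbits_mul_card ψ (hermitianPts q F) (fun g =>
    MlSet_preserves σ hσ hσσ (hLMl (by rw [← hψ]; exact ⟨g, rfl⟩)))
  rw [hψ, Fintype.card_prod, ← Nat.card_eq_fintype_card (α := rootsOfUnity w F), hroots] at hB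
  rw [hB, Fintype.sum_prod_type]
  have hfix : ∀ (m : SpecialLinearGroup (Fin 2) E) (ε : rootsOfUnity w F),
      Nat.card {x // x ∈ hermitianPts q F ∧ glAct (ψ (m, ε)) x = x} =
      #{z : F × F | z.1 ^ (q + 1) - z.2 ^ (q + 1) = 1 ∧
        (((ε : Fˣ) : F)) * ρ m 0 0 * z.1 + ((ε : Fˣ) : F) * ρ m 0 1 * z.2 = z.1 ∧
        ((ε : Fˣ) : F) * ρ m 1 0 * z.1 + ((ε : Fˣ) : F) * ρ m 1 1 * z.2 = z.2} +
      (if m ^ 2 = 1 then q + 1 else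
        if m ^ (2 * p) = 1 then 1 else if m ^ (q - 1) = 1 then 2 else 0) := by
    intro m ε
    rw [card_fixed q (ψ (m, ε)) (mul_scal_val (f m) ε (hval m))]
    congr 1
    have hinf := card_inf p hq hF h2 σ hσ hσσ (ρ m) (by rw [hσ, h01]) (by rw [hσ, h11])
    simp only [hρpow] at hinf
    rw [← hinf]
    congr 1
    ext t
    simp only [mem_filter, mem_univ, true_and]
    refine and_congr_right fun _ => ?_
    rw [← mul_right_inj' (ε : Fˣ).ne_zero (b := ρ m 1 0 + ρ m 1 1 * t)]
    constructor <;> intro h <;> linear_combination h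
  have hm : ∀ m : SpecialLinearGroup (Fin 2) E, ∑ ε : rootsOfUnity w F,
      Nat.card {x // x ∈ hermitianPts q F ∧ glAct (ψ (m, ε)) x = x} =
      ((if m = 1 then q ^ 3 - q else 0) + (q + 1) * if m ≠ 1 ∧ m ^ w = 1 then 2 else 0) +
      w * (if m ^ 2 = 1 then q + 1 else
        if m ^ (2 * p) = 1 then 1 else if m ^ (q - 1) = 1 then 2 else 0) := by
    intro m
    rw [sum_congr rfl fun ε _ => hfix m ε, sum_add_distrib, sum_const, card_univ,
      ← Nat.card_eq_fintype_card (α := rootsOfUnity w F), hroots, smul_eq_mul]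
    congr 1
    have hs := sum_aff p hq hF h2 σ hσ hσσ (ρ m) (by rw [hσ, h01]) (by rw [hσ, h11]) hw hwp hwq
    simp only [hρpow, hρone, ne_eq] at hs
    rw [← sum_rootsOfUnity hw0] at hs
    simpa only [ne_eq] using hs
  rw [sum_congr rfl fun m _ => hm m, sum_add_distrib, sum_add_distrib, ← mul_sum, ← mul_sum,
    sum_ite_eq' univ (1 : SpecialLinearGroup (Fin 2) E), if_pos (mem_univ _)]

lemma formula_odd {P q w g N s : ℚ} (hP : 1 < P) (hw : w ≠ 0)
    (hN : N * (P * (P - 1) * (P + 1) * w) =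
      (q ^ 3 - q) + (q + 1) * (P * (P - 1) * (g - 1)) + w * s)
    (hs : s + 3 * P = 2 * q + P ^ 3) :
    N = 1 + 2 * (q - P) / (P * (P ^ 2 - 1)) + (q + 1) * g / ((P + 1) * w) +
      (q ^ 2 - q - P * (P - 1)) * (q + 1) / (P * (P - 1) * (P + 1) * w) := by
  have h0 : P ≠ 0 := by linarith
  have h1 : P - 1 ≠ 0 := by linarith
  have h2 : P + 1 ≠ 0 := by linarith
  have h3 : P ^ 2 - 1 = (P - 1) * (P + 1) := by ring
  have hs' : s = 2 * q + P ^ 3 - 3 * P := by linear_combination hs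
  have hD : P * (P - 1) * (P + 1) * w ≠ 0 := by simp [h0, h1, h2, hw]
  refine mul_right_cancel₀ hD ?_
  rw [hN, hs', h3]
  field_simp
  ring

lemma formula_even {P q w N s : ℚ} (hP : 1 < P) (hw : w ≠ 0)
    (hN : N * (P * (P - 1) * (P + 1) * w) = (q ^ 3 - q) + w * s)
    (hs : s + 2 * P ^ 2 + 2 * P = 2 * q + 2 * P ^ 3) :
    N = 2 + 2 * (q - P ^ 2) / (P * (P ^ 2 - 1)) +
      (q / P) * ((q - 1) / (P ^ 2 - 1)) * ((q + 1) / w) := by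
  have h0 : P ≠ 0 := by linarith
  have h1 : P - 1 ≠ 0 := by linarith
  have h2 : P + 1 ≠ 0 := by linarith
  have h3 : P ^ 2 - 1 = (P - 1) * (P + 1) := by ring
  have hs' : s = 2 * q + 2 * P ^ 3 - 2 * P ^ 2 - 2 * P := by linear_combination hs
  have hD : P * (P - 1) * (P + 1) * w ≠ 0 := by simp [h0, h1, h2, hw]
  refine mul_right_cancel₀ hD ?_
  rw [hN, hs', h3]
  field_simp
  ring

end count

end

end HermOrb

theorem stmt15 (p h q k w : ℕ) [hp : Fact (Nat.Prime p)] (hpodd : Odd p)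
    (hh : 1 ≤ h) (hq : q = p ^ h) (hq4 : q % 4 = 1)
    (F : Type*) [Field F] [Fintype F] (hF : Fintype.card F = q ^ 2)
    (hk : k ∣ h) (hw : w ∣ (q + 1) / 2)
    (L : Subgroup (GL (Fin 3) F)) (hLMl : (L : Set (GL (Fin 3) F)) ⊆ MlSet q F)
    (hZ1card : Nat.card ((L : Set (GL (Fin 3) F)) ∩ Z1Set q F : Set (GL (Fin 3) F)) = w)
    (S : Subgroup (GL (Fin 3) F))
    (hSiso : Nonempty (↥S ≃* Matrix.SpecialLinearGroup (Fin 2) (GaloisField p k)))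
    (hgen : L = Subgroup.closure
      ((S : Set (GL (Fin 3) F)) ∪ ((L : Set (GL (Fin 3) F)) ∩ Z1Set q F)))
    (htriv : (S : Set (GL (Fin 3) F)) ∩ ((L : Set (GL (Fin 3) F)) ∩ Z1Set q F) ⊆ {1}) :
    (Even (h / k) →
      (numOrbits L (hermitianPts q F) : ℚ)
        = 2 + 2 * ((q : ℚ) - (p : ℚ) ^ (2 * k)) / ((p : ℚ) ^ k * ((p : ℚ) ^ (2 * k) - 1))
          + ((q : ℚ) / (p : ℚ) ^ k) * (((q : ℚ) - 1) / ((p : ℚ) ^ (2 * k) - 1))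
            * (((q : ℚ) + 1) / (w : ℚ))) ∧
    (Odd (h / k) →
      (numOrbits L (hermitianPts q F) : ℚ)
        = 1 + 2 * ((q : ℚ) - (p : ℚ) ^ k) / ((p : ℚ) ^ k * ((p : ℚ) ^ (2 * k) - 1))
          + ((q : ℚ) + 1) * (Nat.gcd (p ^ k + 1) w : ℚ) / (((p : ℚ) ^ k + 1) * (w : ℚ))
          + ((q : ℚ) ^ 2 - (q : ℚ) - (p : ℚ) ^ k * ((p : ℚ) ^ k - 1)) * ((q : ℚ) + 1)
            / ((p : ℚ) ^ k * ((p : ℚ) ^ k - 1) * ((p : ℚ) ^ k + 1) * (w : ℚ))) := by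
  obtain ⟨φ⟩ := hSiso
  let _ : Fintype (GaloisField p k) := Fintype.ofFinite _
  have hk0 : k ≠ 0 := by
    rintro rfl
    rw [zero_dvd_iff] at hk
    omega
  have hp1 : 1 < p := hp.out.one_lt
  have hE : Fintype.card (GaloisField p k) = p ^ k := by
    rw [← Nat.card_eq_fintype_card, GaloisField.card p k hk0]
  have hP1 : 1 < p ^ k := Nat.one_lt_pow hk0 hp1
  have hqr : q = Fintype.card (GaloisField p k) ^ (h / k) := by
    rw [hE, hq, ← pow_mul, Nat.mul_div_cancel' hk]
  have hq1 : 1 ≤ q := by rw [hq]; exact Nat.one_le_pow _ _ hp.out.pos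
  have hFp : Fintype.card F = p ^ (h * 2) := by rw [hF, hq, pow_mul]
  have : CharP F p := charP_of_card_eq_prime_pow hFp
  have h2 : (2 : F) ≠ 0 := Ring.two_ne_zero (by
    rw [ringChar.eq F p]
    rintro rfl
    exact absurd hpodd (by decide))
  let _ : Algebra (ZMod p) F := ZMod.algebra F p
  obtain ⟨i⟩ : Nonempty (GaloisField p k →ₐ[ZMod p] F) := by
    apply FiniteField.nonempty_algHom_of_finrank_dvd
    have hfr : Module.finrank (ZMod p) F = h * 2 := by
      have := Module.card_eq_pow_finrank (K := ZMod p) (V := F)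
      rw [hFp, ZMod.card] at this
      exact (Nat.pow_right_injective hp.out.two_le this).symm
    rw [hfr, GaloisField.finrank p hk0]
    exact hk.mul_right 2
  have hσ : ∀ x, iterateFrobenius F p h x = x ^ q := fun x => by
    rw [iterateFrobenius_def, hq]
  have hσσ : ∀ x, iterateFrobenius F p h (iterateFrobenius F p h x) = x := fun x => by
    rw [hσ, hσ, ← pow_mul, ← sq, ← hF, FiniteField.pow_card]
  have hwodd : Odd w := by
    have : Odd ((q + 1) / 2) := by rw [Nat.odd_iff]; omega
    exact this.of_dvd_nat hw
  have hwq : w ∣ q + 1 := hw.trans (Nat.div_dvd_of_dvd (by omega))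
  have hwp : Nat.Coprime w p := by
    have h1 : Nat.Coprime (q + 1) q := by simp
    exact (h1.coprime_dvd_left hwq).coprime_dvd_right
      (by rw [hq]; exact dvd_pow_self p (by omega))
  have hw0 : w ≠ 0 := by rintro rfl; simp at hwodd
  have hcount := HermOrb.numOrbits_mul_eq p hq1 hF h2 _ hσ hσσ hwodd hwp hwq L hLMl hZ1card S φ hgen
  rw [HermOrb.sum_eps p hE hqr hF h2 i.toRingHom hwodd hwp hwq, HermOrb.card_SL2] at hcount
  have hPQ : (1 : ℚ) < (p : ℚ) ^ k := by exact_mod_cast hP1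
  have hwQ : (w : ℚ) ≠ 0 := by exact_mod_cast hw0
  have hq3 : q ≤ q ^ 3 := Nat.le_self_pow (by omega) q
  have hg1 : 1 ≤ Nat.gcd (p ^ k + 1) w := Nat.gcd_pos_of_pos_left _ (by omega)
  rw [mul_comm 2 k, pow_mul]
  constructor
  · intro hr
    have hs := HermOrb.sum_inf_even p hE hqr hF h2 i.toRingHom hr
    rw [hE] at hcount hs hqr
    rw [HermOrb.gcd_eq_one_of_even hP1.le hqr hr hwodd hwq] at hcount
    -- only the value `s` of the sum over `SL₂` matters from here on
    obtain ⟨s, hcount, hs⟩ : ∃ s : ℕ, numOrbits L (hermitianPts q F) *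
        (p ^ k * (p ^ k - 1) * (p ^ k + 1) * w) =
          (q ^ 3 - q) + (q + 1) * (p ^ k * (p ^ k - 1) * (1 - 1)) + w * s ∧
        s + 2 * (p ^ k) ^ 2 + 2 * p ^ k = 2 * q + 2 * (p ^ k) ^ 3 := ⟨_, hcount, hs⟩
    refine HermOrb.formula_even (s := (s : ℚ)) hPQ hwQ ?_ (by exact_mod_cast hs)
    have := congrArg (Nat.cast : ℕ → ℚ) hcount
    push_cast [Nat.cast_sub hq3, Nat.cast_sub hP1.le] at this ⊢
    linear_combination this
  · intro hr
    have hs := HermOrb.sum_inf_odd p hE hqr hF h2 i.toRingHom hr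
    rw [hE] at hcount hs
    -- only the value `s` of the sum over `SL₂` matters from here on
    obtain ⟨s, hcount, hs⟩ : ∃ s : ℕ, numOrbits L (hermitianPts q F) *
        (p ^ k * (p ^ k - 1) * (p ^ k + 1) * w) =
          (q ^ 3 - q) + (q + 1) * (p ^ k * (p ^ k - 1) * (Nat.gcd (p ^ k + 1) w - 1)) + w * s ∧
        s + 3 * p ^ k = 2 * q + (p ^ k) ^ 3 := ⟨_, hcount, hs⟩
    refine HermOrb.formula_odd (s := (s : ℚ)) hPQ hwQ ?_ (by exact_mod_cast hs)
    have := congrArg (Nat.cast : ℕ → ℚ) hcount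
    push_cast [Nat.cast_sub hq3, Nat.cast_sub hP1.le, Nat.cast_sub hg1] at this ⊢
    linear_combination this
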